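/- arXiv:2411.14361 — 2 statements merged into one kernel-verified Lean document; each statement's English description precedes it below -/
import Mathlib

section
/- Let q ≥ 3 be an odd integer. There is a constant A > 0 depending only on q such that the following holds for every n ≥ 2 and δ ∈ (0,1): suppose E : 𝔽₂^k → 𝔽₂^n is a linear map and H_1,…,H_k are q-uniform hypergraph matchings on [n], each containing at least δn hyperedges, such that Σ_{u∈C} E(b)_u = b_i for every b ∈ 𝔽₂^k, every i ∈ [k], and every C ∈ H_i. Then k ≤ A · δ^{−1} · n^{1−2/q} · (log n)². -/
open Finset

/-!
Regard the hyperedges of all the `H i` as one hypergraph on `n` vertices, coloured by `i`, and fix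
`m` about `n ^ (1 - 2 / q)`. Suppose that the number of hyperedges through any `s` vertices is at
most twice a multiple `b` of the threshold `max 1 (n * (m / n) ^ s)`. While some vertex set `Q`
violates this bound without the factor two, split the hyperedges through `Q` off as a batch.

To bound the number of hyperedges in batches, take two members `D`, `D'` of a batch with set `Q`.
They give edges of a Kikuchi graph on matrices of vertices with `m` columns and one row for each
element of `D \ Q`: along such an edge, a word consisting of one half of `D \ Q` and the
complementary half of `D' \ Q` is replaced by the word made of the remaining halves. The values of
the code on unit messages, summed over the entries of the matrix, change by `e_i + e_j`, where `i`,
`j` are the colours of `D`, `D'`, because the contribution of `Q` cancels in characteristic two.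
Thus each edge is separated only by the coordinates `i` and `j`, and recursively splitting the
vertices along coordinates bounds the number of edges by the colour degrees times `N * log N` for
`N` matrices. The degree bound on the hypergraph makes the colour degrees small on average.

What is left after removing the batches satisfies the bound with `b` in place of `2 * b`. Starting
from `b` of order `n`, about `log n` halvings make `b` constant, and then the bound for single
vertices limits the number of hyperedges to `O(n * m)`. Each round costs `O(n * m * log n)`
hyperedges.
-/

section Isoperimetry

lemma mul_log_add_mul_log_add_le {a b : ℕ} (ha : 0 < a) (hab : a ≤ b) :
    a * Nat.log 2 a + b * Nat.log 2 b + a ≤ (a + b) * Nat.log 2 (a + b) := by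
  have hlog_a : Nat.log 2 a + 1 ≤ Nat.log 2 (a + b) := by
    rw [← Nat.log_mul_base one_lt_two ha.ne']
    exact Nat.log_mono_right (by omega)
  have hlog_b : Nat.log 2 b ≤ Nat.log 2 (a + b) := Nat.log_mono_right (by omega)
  calc a * Nat.log 2 a + b * Nat.log 2 b + a
      = a * (Nat.log 2 a + 1) + b * Nat.log 2 b := by ring
    _ ≤ a * Nat.log 2 (a + b) + b * Nat.log 2 (a + b) := by gcongr
    _ = (a + b) * Nat.log 2 (a + b) := by ring

variable {V E κ β : Type*} [DecidableEq V]

/-- The edges of `D` with both ends in `X`. -/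
def edgesWithin (D : Finset E) (s t : E → V) (X : Finset V) : Finset E :=
  {e ∈ D | s e ∈ X ∧ t e ∈ X}

lemma exists_coordinate_split {φ : V → κ → β} {X : Finset V} {v w : V} (hv : v ∈ X) (hw : w ∈ X)
    (hvw : φ v ≠ φ w) :
    ∃ (i : κ) (A B : Finset V), A ∪ B = X ∧ Disjoint A B ∧ A.Nonempty ∧ #A ≤ #B ∧
      ∀ a ∈ A, ∀ b ∈ B, φ a i ≠ φ b i := by
  classical
  obtain ⟨i, hi⟩ := Function.ne_iff.1 hvw
  let A := {x ∈ X | φ x i = φ v i}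
  let B := {x ∈ X | ¬ φ x i = φ v i}
  have hunion : A ∪ B = X := filter_union_filter_not_eq _ _
  have hdisj : Disjoint A B := disjoint_filter_filter_not _ _ _
  have hAB : ∀ a ∈ A, ∀ b ∈ B, φ a i ≠ φ b i := fun a ha b hb h =>
    (mem_filter.1 hb).2 (h ▸ (mem_filter.1 ha).2)
  rcases le_total #A #B with hle | hle
  · exact ⟨i, A, B, hunion, hdisj, ⟨v, mem_filter.2 ⟨hv, rfl⟩⟩, hle, hAB⟩
  · exact ⟨i, B, A, by rwa [union_comm], hdisj.symm, ⟨w, mem_filter.2 ⟨hw, hi.symm⟩⟩, hle,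
      fun b hb a ha => (hAB a ha b hb).symm⟩

variable [DecidableEq κ]

/-- In a multigraph with edge set `D`, where the edge `e` is incident to `f e` and carries the
colours `cols e`, the number of edges of colour `i` at the vertex `v`. Directed edges have two
ends; `f` selects the one that is counted. -/
def colourDegree (D : Finset E) (f : E → V) (cols : E → Finset κ) (v : V) (i : κ) : ℕ :=
  #{e ∈ D | f e = v ∧ i ∈ cols e}

variable {D : Finset E} {s t f : E → V} {cols : E → Finset κ} {φ : V → κ → β}

lemma card_edgesWithin_union_le {Δ : ℕ} {A B : Finset V} {i : κ}
    (hcols : ∀ e ∈ D, ∀ i, φ (s e) i ≠ φ (t e) i → i ∈ cols e)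
    (hs : ∀ v i, colourDegree D s cols v i ≤ Δ) (ht : ∀ v i, colourDegree D t cols v i ≤ Δ)
    (hAB : ∀ a ∈ A, ∀ b ∈ B, φ a i ≠ φ b i) :
    #(edgesWithin D s t (A ∪ B)) ≤
      #(edgesWithin D s t A) + #(edgesWithin D s t B) + 2 * Δ * #A := by
  classical
  let leaving : (E → V) → Finset E := fun f => A.biUnion fun v => {e ∈ D | f e = v ∧ i ∈ cols e}
  have card_leaving (f : E → V) (hf : ∀ v i, colourDegree D f cols v i ≤ Δ) :
      #(leaving f) ≤ #A * Δ := card_biUnion_le_card_mul _ _ _ fun v _ => hf v i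
  have hcover : edgesWithin D s t (A ∪ B) ⊆
      edgesWithin D s t A ∪ edgesWithin D s t B ∪ (leaving s ∪ leaving t) := by
    intro e he
    simp only [edgesWithin, leaving, mem_filter, mem_union, mem_biUnion] at he ⊢
    obtain ⟨heD, hse | hse, hte | hte⟩ := he
    · exact .inl (.inl ⟨heD, hse, hte⟩)
    · exact .inr (.inl ⟨s e, hse, heD, rfl, hcols e heD i (hAB _ hse _ hte)⟩)
    · exact .inr (.inr ⟨t e, hte, heD, rfl, hcols e heD i (hAB _ hte _ hse).symm⟩)
    · exact .inl (.inr ⟨heD, hse, hte⟩)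
  calc #(edgesWithin D s t (A ∪ B))
      ≤ #(edgesWithin D s t A) + #(edgesWithin D s t B) + (#(leaving s) + #(leaving t)) :=
        (card_le_card hcover).trans <| (card_union_le _ _).trans <|
          Nat.add_le_add (card_union_le _ _) (card_union_le _ _)
    _ ≤ #(edgesWithin D s t A) + #(edgesWithin D s t B) + (#A * Δ + #A * Δ) := by
        gcongr
        exacts [card_leaving s hs, card_leaving t ht]
    _ = _ := by ring

/- Any edge inside `X` has ends separated by some coordinate `i` of `φ`. Splitting `X` along that
coordinate cuts only edges of colour `i`, at most `2Δ` for each vertex of the smaller part. -/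
theorem card_edgesWithin_le {Δ : ℕ} (hφ : ∀ e ∈ D, φ (s e) ≠ φ (t e))
    (hcols : ∀ e ∈ D, ∀ i, φ (s e) i ≠ φ (t e) i → i ∈ cols e)
    (hs : ∀ v i, colourDegree D s cols v i ≤ Δ) (ht : ∀ v i, colourDegree D t cols v i ≤ Δ)
    (X : Finset V) : #(edgesWithin D s t X) ≤ 2 * Δ * (#X * Nat.log 2 #X) := by
  induction X using Finset.strongInduction with
  | H X ih =>
  obtain hempty | ⟨e, he⟩ := (edgesWithin D s t X).eq_empty_or_nonempty
  · simp [hempty]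
  obtain ⟨heD, hse, hte⟩ := mem_filter.1 he
  obtain ⟨i, A, B, rfl, hdisj, hA, hle, hAB⟩ := exists_coordinate_split hse hte (hφ e heD)
  have hcard : #(A ∪ B) = #A + #B := card_union_of_disjoint hdisj
  have hA_pos := hA.card_pos
  have ihA := ih A (subset_union_left.ssubset_of_ne fun h => by rw [← h] at hcard; omega)
  have ihB := ih B (subset_union_right.ssubset_of_ne fun h => by rw [← h] at hcard; omega)
  calc #(edgesWithin D s t (A ∪ B))
      ≤ #(edgesWithin D s t A) + #(edgesWithin D s t B) + 2 * Δ * #A :=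
        card_edgesWithin_union_le hcols hs ht hAB
    _ ≤ 2 * Δ * (#A * Nat.log 2 #A) + 2 * Δ * (#B * Nat.log 2 #B) + 2 * Δ * #A := by gcongr
    _ = 2 * Δ * (#A * Nat.log 2 #A + #B * Nat.log 2 #B + #A) := by ring
    _ ≤ 2 * Δ * (#(A ∪ B) * Nat.log 2 #(A ∪ B)) := by
        rw [hcard]
        gcongr
        exact mul_log_add_mul_log_add_le hA_pos hle

lemma colourDegree_le_of_subset {K : Finset E} {Δ : ℕ} (hK : K ⊆ D)
    (h : ∀ e ∈ K, ∀ i ∈ cols e, colourDegree D f cols (f e) i ≤ Δ) (v : V) (i : κ) :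
    colourDegree K f cols v i ≤ Δ := by
  obtain hempty | ⟨e, he⟩ := ({e ∈ K | f e = v ∧ i ∈ cols e} : Finset E).eq_empty_or_nonempty
  · simp [colourDegree, hempty]
  · obtain ⟨heK, rfl, hi⟩ := mem_filter.1 he
    exact (card_le_card (filter_subset_filter _ hK)).trans (h e heK i hi)

lemma card_filter_lt_colourDegree_le {C : ℝ} (hC : 0 < C)
    (h : ∑ e ∈ D, ∑ i ∈ cols e, (colourDegree D f cols (f e) i : ℝ) ≤ C * #D) :
    (#{e ∈ D | ∃ i ∈ cols e, 4 * C < colourDegree D f cols (f e) i} : ℝ) ≤ #D / 4 := by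
  set bad := {e ∈ D | ∃ i ∈ cols e, 4 * C < colourDegree D f cols (f e) i}
  have hbad : ∀ e ∈ bad, 4 * C ≤ ∑ i ∈ cols e, (colourDegree D f cols (f e) i : ℝ) := by
    intro e he
    obtain ⟨i, hi, hlt⟩ := (mem_filter.1 he).2
    exact hlt.le.trans (single_le_sum
      (f := fun i => (colourDegree D f cols (f e) i : ℝ)) (fun _ _ => by positivity) hi)
  have : #bad * (4 * C) ≤ C * #D := calc
    #bad * (4 * C) = #bad • (4 * C) := (nsmul_eq_mul _ _).symm
    _ ≤ ∑ e ∈ bad, ∑ i ∈ cols e, (colourDegree D f cols (f e) i : ℝ) :=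
        card_nsmul_le_sum _ _ _ hbad
    _ ≤ ∑ e ∈ D, ∑ i ∈ cols e, (colourDegree D f cols (f e) i : ℝ) :=
        sum_le_sum_of_subset_of_nonneg (filter_subset _ _) fun _ _ _ => by positivity
    _ ≤ C * #D := h
  nlinarith

/- By Markov's inequality at least half of the edges see colour degrees at most `4C` at both ends;
these edges satisfy the hypotheses of `card_edgesWithin_le`. -/
theorem card_le_of_sum_colourDegree_le [Fintype V] (hφ : ∀ e ∈ D, φ (s e) ≠ φ (t e))
    (hcols : ∀ e ∈ D, ∀ i, φ (s e) i ≠ φ (t e) i → i ∈ cols e) {C : ℝ} (hC : 0 < C)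
    (hs : ∑ e ∈ D, ∑ i ∈ cols e, (colourDegree D s cols (s e) i : ℝ) ≤ C * #D)
    (ht : ∑ e ∈ D, ∑ i ∈ cols e, (colourDegree D t cols (t e) i : ℝ) ≤ C * #D) :
    (#D : ℝ) ≤ 16 * C * (Fintype.card V * Nat.log 2 (Fintype.card V)) := by
  classical
  let overloaded : (E → V) → Finset E := fun f =>
    {e ∈ D | ∃ i ∈ cols e, 4 * C < colourDegree D f cols (f e) i}
  let K := D \ (overloaded s ∪ overloaded t)
  have hKD : K ⊆ D := sdiff_subset
  have hK_card : (#D : ℝ) ≤ 2 * #K := by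
    have hsplit : (#D : ℝ) ≤ #K + (#(overloaded s) + #(overloaded t)) := by
      have := (card_le_card_sdiff_add_card (s := D) (t := overloaded s ∪ overloaded t)).trans
        (Nat.add_le_add_left (card_union_le _ _) _)
      exact_mod_cast this
    have hs' : (#(overloaded s) : ℝ) ≤ #D / 4 := card_filter_lt_colourDegree_le hC hs
    have ht' : (#(overloaded t) : ℝ) ≤ #D / 4 := card_filter_lt_colourDegree_le hC ht
    linarith
  have hdeg : ∀ f : E → V, (∀ e ∈ K, e ∉ overloaded f) →
      ∀ v i, colourDegree K f cols v i ≤ ⌊4 * C⌋₊ := by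
    refine fun f hf => colourDegree_le_of_subset hKD fun e he i hi => Nat.le_floor ?_
    by_contra! hlt
    exact hf e he (mem_filter.2 ⟨hKD he, i, hi, hlt⟩)
  have hK := card_edgesWithin_le (fun e he => hφ e (hKD he)) (fun e he => hcols e (hKD he))
    (hdeg s fun e he h => (mem_sdiff.1 he).2 (mem_union_left _ h))
    (hdeg t fun e he h => (mem_sdiff.1 he).2 (mem_union_right _ h)) univ
  simp only [edgesWithin, mem_univ, and_self, filter_true, card_univ] at hK
  calc (#D : ℝ) ≤ 2 * #K := hK_card
    _ ≤ 2 * (2 * ⌊4 * C⌋₊ * (Fintype.card V * Nat.log 2 (Fintype.card V))) := by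
        gcongr
        exact_mod_cast hK
    _ ≤ 2 * (2 * (4 * C) * (Fintype.card V * Nat.log 2 (Fintype.card V))) := by
        gcongr
        exact Nat.floor_le (by positivity)
    _ = _ := by ring

end Isoperimetry

section Occurrences

variable {ρ σ U : Type*} [Fintype ρ] [DecidableEq U]

/-- An upper bound for the expected number of placements of `w'` in a random matrix with a planted
copy of `w`, where `p` is the expected number of occurrences of a given letter in a row. -/
def overlapWeight (p : ℝ) (w w' : ρ → U) : ℝ :=
  ∏ r, ((if w r = w' r then 1 else 0) + p)

variable [DecidableEq ρ]

lemma sum_overlapWeight_le {π : Type*} {P : Finset π} {f : π → ρ → U} {w : ρ → U} {K p : ℝ}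
    (hp : 0 ≤ p) (h : ∀ T : Finset ρ, (#{e ∈ P | ∀ r ∈ T, f e r = w r} : ℝ) ≤ K * p ^ #T) :
    ∑ e ∈ P, overlapWeight p (f e) w ≤ 2 ^ Fintype.card ρ * (K * p ^ Fintype.card ρ) := by
  calc ∑ e ∈ P, overlapWeight p (f e) w
      = ∑ T : Finset ρ, #{e ∈ P | ∀ r ∈ T, f e r = w r} * p ^ (Fintype.card ρ - #T) := by
        simp only [overlapWeight, Fintype.prod_add, prod_boole, prod_const, card_compl]
        rw [sum_comm]
        refine sum_congr rfl fun T _ => ?_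
        simp only [ite_mul, one_mul, zero_mul, ← sum_filter, sum_const, nsmul_eq_mul]
    _ ≤ ∑ _T : Finset ρ, K * p ^ Fintype.card ρ := by
        refine sum_le_sum fun T _ => ?_
        rw [← Nat.add_sub_cancel' (card_le_univ T), pow_add, ← mul_assoc, Nat.add_sub_cancel_left]
        gcongr
        exact h T
    _ = 2 ^ Fintype.card ρ * (K * p ^ Fintype.card ρ) := by
        simp

variable [Fintype σ]

/-- The ways to locate the word `w` in the matrix `x`, one entry in each row. -/
def placements (x : ρ → σ → U) (w : ρ → U) : Finset (ρ → σ) :=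
  Fintype.piFinset fun r => {s | x r s = w r}

lemma mem_placements {x : ρ → σ → U} {w : ρ → U} {j : ρ → σ} :
    j ∈ placements x w ↔ ∀ r, x r (j r) = w r := by
  simp [placements]

variable [Fintype U] [DecidableEq σ]

lemma card_filter_forall_mem_eq_mul (T : Finset σ) (w : σ → U) :
    #{y : σ → U | ∀ s ∈ T, y s = w s} * Fintype.card U ^ #T =
      Fintype.card U ^ Fintype.card σ := by
  have hfilter : ({y : σ → U | ∀ s ∈ T, y s = w s} : Finset (σ → U)) =
      Fintype.piFinset fun s => if s ∈ T then {w s} else univ := by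
    ext y
    simp only [mem_filter, mem_univ, true_and, Fintype.mem_piFinset]
    exact forall_congr' fun s => by by_cases hs : s ∈ T <;> simp [hs]
  have hT : Fintype.card U ^ #T = ∏ s, if s ∈ T then Fintype.card U else 1 := by
    simp [prod_ite_mem]
  rw [hfilter, Fintype.card_piFinset, hT, ← prod_mul_distrib]
  calc _ = ∏ _s : σ, Fintype.card U :=
        prod_congr rfl fun s _ => by by_cases hs : s ∈ T <;> simp [hs]
    _ = _ := by simp

variable [Nonempty U]

lemma card_filter_apply_eq (s : σ) (a : U) :
    (#{y : σ → U | y s = a} : ℝ) = Fintype.card (σ → U) / Fintype.card U := by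
  rw [eq_div_iff (by positivity), Fintype.card_fun]
  have := card_filter_forall_mem_eq_mul {s} fun _ => a
  simp only [mem_singleton, forall_eq, card_singleton, pow_one] at this
  exact_mod_cast this

lemma card_filter_apply_eq_and_apply_eq_le (s s' : σ) (a b : U) :
    (#{y : σ → U | y s = a ∧ y s' = b} : ℝ) ≤ Fintype.card (σ → U) / Fintype.card U *
      ((if s = s' then if a = b then 1 else 0 else 0) + 1 / Fintype.card U) := by
  rcases eq_or_ne s s' with rfl | hs
  · rcases eq_or_ne a b with rfl | hab
    · simp only [and_self, card_filter_apply_eq, if_true]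
      exact le_mul_of_one_le_right (by positivity) (le_add_of_nonneg_right (by positivity))
    · have hempty : ({y : σ → U | y s = a ∧ y s = b} : Finset (σ → U)) = ∅ :=
        filter_eq_empty_iff.2 fun y _ h => hab (h.1.symm.trans h.2)
      simp only [hempty, hab, card_empty, Nat.cast_zero, if_true, if_false]
      positivity
  · have h := card_filter_forall_mem_eq_mul {s, s'} (Function.update (fun _ => b) s a)
    simp only [mem_insert, mem_singleton, forall_eq_or_imp, forall_eq, Function.update_self,
      Function.update_of_ne hs.symm, card_pair hs, ← Fintype.card_fun] at h
    rw [if_neg hs, zero_add, div_mul_div_comm, mul_one, ← sq, le_div_iff₀ (by positivity)]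
    exact_mod_cast h.le

lemma sum_card_filter_apply_eq (a : U) :
    ∑ y : σ → U, (#{s | y s = a} : ℝ) =
      Fintype.card (σ → U) * (Fintype.card σ / Fintype.card U) := by
  have hswap := sum_card_bipartiteAbove_eq_sum_card_bipartiteBelow
    (s := (univ : Finset (σ → U))) (t := (univ : Finset σ)) fun y s => y s = a
  calc ∑ y : σ → U, (#{s | y s = a} : ℝ) = ∑ s : σ, (#{y : σ → U | y s = a} : ℝ) :=
        mod_cast hswap
    _ = _ := by
        simp only [card_filter_apply_eq, sum_const, card_univ, nsmul_eq_mul]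
        ring

lemma sum_card_filter_mul_card_filter_le (a b : U) :
    ∑ y : σ → U, (#{s | y s = a} * #{s | y s = b} : ℝ) ≤
      Fintype.card (σ → U) * (Fintype.card σ / Fintype.card U) *
        ((if a = b then 1 else 0) + Fintype.card σ / Fintype.card U) := by
  have hswap := sum_card_bipartiteAbove_eq_sum_card_bipartiteBelow
    (s := (univ : Finset (σ → U))) (t := (univ : Finset (σ × σ)))
    fun y z => y z.1 = a ∧ y z.2 = b
  calc ∑ y : σ → U, (#{s | y s = a} * #{s | y s = b} : ℝ)
      = ∑ y : σ → U, (#{z : σ × σ | y z.1 = a ∧ y z.2 = b} : ℝ) := by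
        refine sum_congr rfl fun y _ => ?_
        rw [← Nat.cast_mul, ← card_product, ← filter_product, univ_product_univ]
    _ = ∑ z : σ × σ, (#{y : σ → U | y z.1 = a ∧ y z.2 = b} : ℝ) := mod_cast hswap
    _ ≤ ∑ z : σ × σ, (Fintype.card (σ → U) / Fintype.card U *
          ((if z.1 = z.2 then if a = b then 1 else 0 else 0) + 1 / Fintype.card U) : ℝ) :=
        sum_le_sum fun z _ => card_filter_apply_eq_and_apply_eq_le _ _ _ _
    _ = _ := by
        simp only [← mul_sum, sum_add_distrib, Fintype.sum_prod_type, sum_ite_eq, mem_univ, if_true,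
          sum_const, card_univ, nsmul_eq_mul, Fintype.card_prod, Nat.cast_mul]
        ring

lemma sum_card_placements (w : ρ → U) :
    ∑ x : ρ → σ → U, (#(placements x w) : ℝ) =
      Fintype.card (ρ → σ → U) * (Fintype.card σ / Fintype.card U) ^ Fintype.card ρ := by
  calc ∑ x : ρ → σ → U, (#(placements x w) : ℝ)
      = ∏ r, ∑ y : σ → U, (#{s | y s = w r} : ℝ) := by
        simp only [placements, Fintype.card_piFinset, Nat.cast_prod, Fintype.prod_sum]
    _ = _ := by
        simp only [sum_card_filter_apply_eq, prod_const, card_univ, mul_pow, Fintype.card_fun,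
          Nat.cast_pow]

lemma sum_card_placements_mul_card_placements_le (w w' : ρ → U) :
    ∑ x : ρ → σ → U, (#(placements x w) * #(placements x w') : ℝ) ≤
      Fintype.card (ρ → σ → U) * (Fintype.card σ / Fintype.card U) ^ Fintype.card ρ *
        overlapWeight (Fintype.card σ / Fintype.card U) w w' := by
  calc ∑ x : ρ → σ → U, (#(placements x w) * #(placements x w') : ℝ)
      = ∏ r, ∑ y : σ → U, (#{s | y s = w r} * #{s | y s = w' r} : ℝ) := by
        simp only [placements, Fintype.card_piFinset, Nat.cast_prod, ← prod_mul_distrib,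
          Fintype.prod_sum]
    _ ≤ ∏ r, (Fintype.card (σ → U) * (Fintype.card σ / Fintype.card U) *
          ((if w r = w' r then 1 else 0) + Fintype.card σ / Fintype.card U) : ℝ) :=
        prod_le_prod (fun _ _ => by positivity) fun r _ =>
          sum_card_filter_mul_card_filter_le _ _
    _ = _ := by
        simp only [overlapWeight, prod_mul_distrib, prod_const, card_univ, Fintype.card_fun,
          Nat.cast_pow]

end Occurrences

section KikuchiGraph

variable {ρ σ U M π κ : Type*} [DecidableEq σ]

/-- Overwrite the entries of `x` at the positions `j`, one in each row, by the word `w`. -/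
def substitute (x : ρ → σ → U) (j : ρ → σ) (w : ρ → U) : ρ → σ → U :=
  fun r => Function.update (x r) (j r) (w r)

variable [Fintype ρ] [Fintype σ]

lemma sum_sum_substitute [AddCommGroup M] (g : U → M) (x : ρ → σ → U) (j : ρ → σ) (w : ρ → U) :
    ∑ r, ∑ s, g (substitute x j w r s) =
      ∑ r, ∑ s, g (x r s) - ∑ r, g (x r (j r)) + ∑ r, g (w r) := by
  rw [← sum_sub_distrib, ← sum_add_distrib]
  refine sum_congr rfl fun r _ => ?_
  have hupdate : ∀ s, g (substitute x j w r s) = Function.update (g ∘ x r) (j r) (g (w r)) s :=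
    fun s => Function.apply_update (fun _ => g) (x r) (j r) (w r) s
  rw [Fintype.sum_congr _ _ hupdate, sum_update_of_mem (mem_univ _),
    ← sum_sdiff (subset_univ {j r}) (f := fun s => g (x r s)), sum_singleton]
  simp only [Function.comp_apply]
  abel

variable [DecidableEq ρ] [DecidableEq U]

lemma mem_placements_substitute (x : ρ → σ → U) (j : ρ → σ) (w : ρ → U) :
    j ∈ placements (substitute x j w) w := by
  simp [mem_placements, substitute]

lemma substitute_substitute_of_mem_placements {x : ρ → σ → U} {j : ρ → σ} {w w' : ρ → U}
    (h : j ∈ placements x w) : substitute (substitute x j w') j w = x := by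
  funext r
  simp [substitute, ← mem_placements.1 h r]

variable [Fintype U]

/-- The edge set of the Kikuchi graph on the matrices `ρ → σ → U`: each `e ∈ P` contributes an edge
at `x` for every placement of `src e` in `x`. An edge consists of `e`, its source matrix and the
placement; a word `dst` fixes its target through `kikuchiTarget`. -/
def kikuchiEdges (P : Finset π) (src : π → ρ → U) : Finset (π × (ρ → σ → U) × (ρ → σ)) :=
  {ω ∈ P ×ˢ univ | ω.2.2 ∈ placements ω.2.1 (src ω.1)}

/-- The matrix obtained by replacing the chosen copy of `src ω.1` by `dst ω.1`. -/
def kikuchiTarget (dst : π → ρ → U) (ω : π × (ρ → σ → U) × (ρ → σ)) : ρ → σ → U :=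
  substitute ω.2.1 ω.2.2 (dst ω.1)

variable {P : Finset π} {src dst : π → ρ → U} {cols : π → Finset κ}

lemma mem_kikuchiEdges {ω : π × (ρ → σ → U) × (ρ → σ)} :
    ω ∈ kikuchiEdges P src ↔ ω.1 ∈ P ∧ ω.2.2 ∈ placements ω.2.1 (src ω.1) := by
  simp [kikuchiEdges]

lemma sum_kikuchiEdges (f : π → (ρ → σ → U) → ℝ) :
    ∑ ω ∈ kikuchiEdges P src, f ω.1 ω.2.1 = ∑ e ∈ P, ∑ x, #(placements x (src e)) * f e x := by
  simp only [kikuchiEdges, sum_filter, sum_product, ← univ_product_univ]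
  refine sum_congr rfl fun e _ => sum_congr rfl fun x _ => ?_
  rw [← sum_filter, sum_const, nsmul_eq_mul, filter_mem_eq_inter, univ_inter]

/-- The edge of the reversed Kikuchi graph, in which `src` and `dst` are exchanged, that traverses
`ω` backwards. -/
def kikuchiReverse (dst : π → ρ → U) (ω : π × (ρ → σ → U) × (ρ → σ)) :
    π × (ρ → σ → U) × (ρ → σ) :=
  (ω.1, kikuchiTarget dst ω, ω.2.2)

lemma kikuchiReverse_mem {ω : π × (ρ → σ → U) × (ρ → σ)} (hω : ω ∈ kikuchiEdges P src) :
    kikuchiReverse dst ω ∈ kikuchiEdges P dst :=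
  mem_kikuchiEdges.2 ⟨(mem_kikuchiEdges.1 hω).1, mem_placements_substitute _ _ _⟩

lemma kikuchiReverse_kikuchiReverse {ω : π × (ρ → σ → U) × (ρ → σ)}
    (hω : ω ∈ kikuchiEdges P src) : kikuchiReverse src (kikuchiReverse dst ω) = ω :=
  Prod.ext rfl <| Prod.ext
    (substitute_substitute_of_mem_placements (mem_kikuchiEdges.1 hω).2) rfl

variable [DecidableEq κ]

lemma colourDegree_kikuchiTarget (x : ρ → σ → U) (i : κ) :
    colourDegree (kikuchiEdges P src) (kikuchiTarget dst) (fun ω => cols ω.1) x i =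
      colourDegree (kikuchiEdges P dst) (fun ω => ω.2.1) (fun ω => cols ω.1) x i := by
  refine card_nbij' (kikuchiReverse dst) (kikuchiReverse src) ?_ ?_ ?_ ?_
  · intro ω hω
    obtain ⟨hmem, htarget, hi⟩ := mem_filter.1 hω
    exact mem_filter.2 ⟨kikuchiReverse_mem hmem, htarget, hi⟩
  · intro ω hω
    obtain ⟨hmem, hsource, hi⟩ := mem_filter.1 hω
    refine mem_filter.2 ⟨kikuchiReverse_mem hmem, ?_, hi⟩
    rw [← hsource]
    exact congrArg (fun ω => ω.2.1) (kikuchiReverse_kikuchiReverse hmem)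
  · exact fun ω hω => kikuchiReverse_kikuchiReverse (mem_filter.1 hω).1
  · exact fun ω hω => kikuchiReverse_kikuchiReverse (mem_filter.1 hω).1

lemma sum_colourDegree_kikuchiTarget :
    ∑ ω ∈ kikuchiEdges (σ := σ) P src, ∑ i ∈ cols ω.1, (colourDegree
        (kikuchiEdges (σ := σ) P src)
        (kikuchiTarget dst) (fun ω => cols ω.1) (kikuchiTarget dst ω) i : ℝ) =
      ∑ ω ∈ kikuchiEdges (σ := σ) P dst, ∑ i ∈ cols ω.1, (colourDegree (kikuchiEdges (σ := σ) P dst)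
        (fun ω => ω.2.1) (fun ω => cols ω.1) ω.2.1 i : ℝ) := by
  simp only [colourDegree_kikuchiTarget]
  exact sum_nbij' (kikuchiReverse dst) (kikuchiReverse src) (fun ω hω => kikuchiReverse_mem hω)
    (fun ω hω => kikuchiReverse_mem hω) (fun ω hω => kikuchiReverse_kikuchiReverse hω)
    (fun ω hω => kikuchiReverse_kikuchiReverse hω) fun ω _ => rfl

lemma colourDegree_kikuchiEdges (x : ρ → σ → U) (i : κ) :
    (colourDegree (kikuchiEdges P src) (fun ω => ω.2.1) (fun ω => cols ω.1) x i : ℝ) =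
      ∑ e ∈ P with i ∈ cols e, (#(placements x (src e)) : ℝ) := by
  calc _ = ∑ ω ∈ kikuchiEdges P src, if ω.2.1 = x ∧ i ∈ cols ω.1 then (1 : ℝ) else 0 := by
        rw [colourDegree, card_filter]
        push_cast
        rfl
    _ = ∑ e ∈ P, ∑ y, #(placements y (src e)) * if y = x ∧ i ∈ cols e then (1 : ℝ) else 0 :=
        sum_kikuchiEdges fun e y => if y = x ∧ i ∈ cols e then (1 : ℝ) else 0
    _ = _ := by simp [sum_filter, ite_and]

variable [Nonempty U]

lemma card_kikuchiEdges :
    (#(kikuchiEdges (σ := σ) P src) : ℝ) = Fintype.card (ρ → σ → U) *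
      (Fintype.card σ / Fintype.card U) ^ Fintype.card ρ * #P := by
  have h := sum_kikuchiEdges (σ := σ) (P := P) (src := src) fun _ _ => 1
  simp only [sum_const, nsmul_eq_mul, mul_one, sum_card_placements] at h
  rw [h, mul_comm]

lemma sum_colourDegree_kikuchiEdges_le {C : ℝ}
    (h : ∀ e ∈ P, ∑ i ∈ cols e, ∑ e' ∈ P with i ∈ cols e',
      overlapWeight (Fintype.card σ / Fintype.card U) (src e') (src e) ≤ C) :
    ∑ ω ∈ kikuchiEdges (σ := σ) P src, ∑ i ∈ cols ω.1, (colourDegree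
        (kikuchiEdges (σ := σ) P src)
        (fun ω => ω.2.1) (fun ω => cols ω.1) ω.2.1 i : ℝ) ≤
      C * #(kikuchiEdges (σ := σ) P src) := by
  set N : ℝ := Fintype.card (ρ → σ → U) * (Fintype.card σ / Fintype.card U) ^ Fintype.card ρ
  calc ∑ ω ∈ kikuchiEdges (σ := σ) P src, ∑ i ∈ cols ω.1, (colourDegree
        (kikuchiEdges (σ := σ) P src)
        (fun ω => ω.2.1) (fun ω => cols ω.1) ω.2.1 i : ℝ)
      = ∑ e ∈ P, ∑ x : ρ → σ → U, #(placements x (src e)) *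
          ∑ i ∈ cols e, ∑ e' ∈ P with i ∈ cols e', (#(placements x (src e')) : ℝ) := by
        simp only [colourDegree_kikuchiEdges]
        exact sum_kikuchiEdges fun e x =>
          ∑ i ∈ cols e, ∑ e' ∈ P with i ∈ cols e', (#(placements x (src e')) : ℝ)
    _ = ∑ e ∈ P, ∑ i ∈ cols e, ∑ e' ∈ P with i ∈ cols e', ∑ x : ρ → σ → U,
          (#(placements x (src e')) * #(placements x (src e)) : ℝ) := by
        refine sum_congr rfl fun e _ => ?_
        simp only [mul_sum]
        rw [sum_comm]
        refine sum_congr rfl fun i _ => ?_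
        rw [sum_comm]
        simp only [mul_comm]
    _ ≤ ∑ e ∈ P, ∑ i ∈ cols e, ∑ e' ∈ P with i ∈ cols e',
          N * overlapWeight (Fintype.card σ / Fintype.card U) (src e') (src e) := by
        gcongr
        exact sum_card_placements_mul_card_placements_le _ _
    _ ≤ ∑ _e ∈ P, N * C := by
        simp only [← mul_sum]
        gcongr with e he
        exact h e he
    _ = C * #(kikuchiEdges (σ := σ) P src) := by
        rw [card_kikuchiEdges, sum_const, nsmul_eq_mul]
        ring

/- Replacing `src e` by `dst e` in the matrix `x` changes the potential `∑ r, ∑ s, g (x r s)` by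
`∑ r, g (dst e r) - ∑ r, g (src e r)`, whatever the placement. -/
theorem card_mul_pow_le_of_sum_overlapWeight_le [AddCommGroup M] (g : U → κ → M)
    (hne : ∀ e ∈ P, ∑ r, g (src e r) ≠ ∑ r, g (dst e r))
    (hcols : ∀ e ∈ P, ∀ i, (∑ r, g (src e r)) i ≠ (∑ r, g (dst e r)) i → i ∈ cols e)
    {C : ℝ} (hC : 0 < C)
    (hsrc : ∀ e ∈ P, ∑ i ∈ cols e, ∑ e' ∈ P with i ∈ cols e',
      overlapWeight (Fintype.card σ / Fintype.card U) (src e') (src e) ≤ C)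
    (hdst : ∀ e ∈ P, ∑ i ∈ cols e, ∑ e' ∈ P with i ∈ cols e',
      overlapWeight (Fintype.card σ / Fintype.card U) (dst e') (dst e) ≤ C) :
    #P * (Fintype.card σ / Fintype.card U : ℝ) ^ Fintype.card ρ ≤
      16 * C * Nat.log 2 (Fintype.card (ρ → σ → U)) := by
  let potential : (ρ → σ → U) → κ → M := fun x => ∑ r, ∑ s, g (x r s)
  have hstep {ω} (hω : ω ∈ kikuchiEdges (σ := σ) P src) : potential (kikuchiTarget dst ω) =
      potential ω.2.1 - ∑ r, g (src ω.1 r) + ∑ r, g (dst ω.1 r) := by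
    refine (sum_sum_substitute g _ _ _).trans ?_
    simp only [mem_placements.1 (mem_kikuchiEdges.1 hω).2, potential]
  have hchange {ω} (hω : ω ∈ kikuchiEdges (σ := σ) P src) (i : κ) :
      potential ω.2.1 i ≠ potential (kikuchiTarget dst ω) i →
        (∑ r, g (src ω.1 r)) i ≠ (∑ r, g (dst ω.1 r)) i := by
    rw [hstep hω, Pi.add_apply, Pi.sub_apply]
    exact mt fun h => by rw [h, sub_add_cancel]
  have hiso := card_le_of_sum_colourDegree_le (D := kikuchiEdges (σ := σ) P src)
    (s := fun ω => ω.2.1) (t := kikuchiTarget dst) (cols := fun ω => cols ω.1) (φ := potential)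
    (fun ω hω h => hne ω.1 (mem_kikuchiEdges.1 hω).1 <| by
      rw [hstep hω, sub_add, eq_comm, sub_eq_self, sub_eq_zero] at h
      exact h)
    (fun ω hω i hi => hcols ω.1 (mem_kikuchiEdges.1 hω).1 i (hchange hω i hi)) hC
    (sum_colourDegree_kikuchiEdges_le hsrc)
    (by
      rw [sum_colourDegree_kikuchiTarget, card_kikuchiEdges, ← card_kikuchiEdges (src := dst)]
      exact sum_colourDegree_kikuchiEdges_le hdst)
  rw [card_kikuchiEdges] at hiso
  have hN : (0 : ℝ) < Fintype.card (ρ → σ → U) := by positivity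
  refine le_of_mul_le_mul_left ?_ hN
  calc _ = _ := by ring
    _ ≤ _ := hiso
    _ = _ := by ring

end KikuchiGraph

section DegreeThreshold

/-- The expected number of edges through `s` given vertices, up to constants, when `p * n` edges
meet a typical vertex of an `n`-vertex hypergraph, and at least `1`. -/
noncomputable def degreeThreshold (n p : ℝ) (s : ℕ) : ℝ :=
  max 1 (n * p ^ s)

variable {n p : ℝ} {q s s' t : ℕ}

lemma one_le_degreeThreshold : 1 ≤ degreeThreshold n p s :=
  le_max_left _ _

lemma one_le_mul_pow_of_two_mul_le (hn : 0 ≤ n) (hp : 0 ≤ p) (hp1 : p ≤ 1)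
    (hnp : 1 ≤ n ^ 2 * p ^ q) (hs : 2 * s ≤ q) : 1 ≤ n * p ^ s := by
  have hsq : 1 ≤ (n * p ^ s) ^ 2 := calc
    1 ≤ n ^ 2 * p ^ q := hnp
    _ ≤ n ^ 2 * p ^ (2 * s) := by gcongr n ^ 2 * ?_; exact pow_le_pow_of_le_one hp hp1 hs
    _ = (n * p ^ s) ^ 2 := by ring
  exact (one_le_sq_iff₀ (by positivity)).1 hsq

lemma degreeThreshold_le_mul_pow (hn : 0 ≤ n) (hp : 0 ≤ p) (hp1 : p ≤ 1)
    (hnp : 1 ≤ n ^ 2 * p ^ q) (hs : 2 * s ≤ q) :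
    degreeThreshold n p s ≤ degreeThreshold n p t * n * p ^ s := by
  rw [degreeThreshold, max_eq_right (one_le_mul_pow_of_two_mul_le hn hp hp1 hnp hs), mul_assoc]
  exact le_mul_of_one_le_left (by positivity) one_le_degreeThreshold

lemma degreeThreshold_add_le_mul_pow (hn : 0 ≤ n) (hp : 0 ≤ p) (hp1 : p ≤ 1)
    (hnp : 1 ≤ n ^ 2 * p ^ q) (hs : 2 * s ≤ q) (hts : t + s + s' ≤ q) :
    degreeThreshold n p (t + s') ≤ degreeThreshold n p t * n * p ^ (s + s') := by
  have hone := one_le_mul_pow_of_two_mul_le hn hp hp1 hnp hs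
  have hbound : n * p ^ t * n * p ^ (s + s') ≤ degreeThreshold n p t * n * p ^ (s + s') := by
    gcongr
    exact le_max_right _ _
  refine (max_le ?_ ?_).trans hbound
  · calc 1 ≤ n ^ 2 * p ^ q := hnp
      _ ≤ n ^ 2 * p ^ (t + s + s') := by gcongr n ^ 2 * ?_; exact pow_le_pow_of_le_one hp hp1 hts
      _ = n * p ^ t * n * p ^ (s + s') := by ring
  · calc n * p ^ (t + s') ≤ n * p ^ s * (n * p ^ (t + s')) :=
          le_mul_of_one_le_left (by positivity) hone
      _ = n * p ^ t * n * p ^ (s + s') := by ring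

end DegreeThreshold

section ColouredHypergraph

variable {κ U : Type*}

/-- `Q` assigns to each hyperedge of `F` a `t`-element subset. Hyperedges with the same subset
form a batch. -/
structure IsBatching (Q : κ × Finset U → Finset U) (t : ℕ) (F : Finset (κ × Finset U)) :
    Prop where
  subset : ∀ D ∈ F, Q D ⊆ D.2
  card_eq : ∀ D ∈ F, #(Q D) = t

/-- A family of coloured hyperedges in which those of the same colour are pairwise disjoint. -/
def IsColourMatching (F : Finset (κ × Finset U)) : Prop :=
  ∀ D ∈ F, ∀ D' ∈ F, D.1 = D'.1 → ∀ u, u ∈ D.2 → u ∈ D'.2 → D = D'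

variable {F F' : Finset (κ × Finset U)} {Q : κ × Finset U → Finset U} {t : ℕ} {d : ℕ → ℝ} {i : κ}
  {A A' : Finset U}

lemma IsColourMatching.mono (hF : IsColourMatching F) (h : F' ⊆ F) : IsColourMatching F' :=
  fun D hD D' hD' => hF D (h hD) D' (h hD')

lemma IsBatching.nonempty (hQ : IsBatching Q t F) (ht : 0 < t) {D : κ × Finset U} (hD : D ∈ F) :
    (Q D).Nonempty :=
  card_pos.1 (ht.trans_eq (hQ.card_eq D hD).symm)

lemma IsColourMatching.eq_of_batch_eq (hF : IsColourMatching F) (hQ : IsBatching Q t F)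
    (ht : 0 < t) {D D' : κ × Finset U} (hD : D ∈ F) (hD' : D' ∈ F) (hcol : D.1 = D'.1)
    (hbatch : Q D = Q D') : D = D' := by
  obtain ⟨u, hu⟩ := hQ.nonempty ht hD
  exact hF D hD D' hD' hcol u (hQ.subset D hD hu) (hQ.subset D' hD' (hbatch ▸ hu))

lemma IsColourMatching.card_filter_colour_le [Fintype U] [DecidableEq κ]
    (hF : IsColourMatching F) (hne : ∀ D ∈ F, D.2.Nonempty) (i : κ) :
    #{D ∈ F | D.1 = i} ≤ Fintype.card U := by
  refine card_le_card_of_forall_subsingleton (fun D u => u ∈ D.2) (fun D hD => ?_)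
    fun u _ D hD D' hD' => ?_
  · obtain ⟨u, hu⟩ := hne D (mem_filter.1 hD).1
    exact ⟨u, mem_univ u, hu⟩
  · obtain ⟨hDF, hcol⟩ := mem_filter.1 hD.1
    obtain ⟨hDF', hcol'⟩ := mem_filter.1 hD'.1
    exact hF D hDF D' hDF' (hcol.trans hcol'.symm) u hD.2 hD'.2

variable [DecidableEq U]

/-- Any `s ≥ 1` vertices lie in at most `d s` common hyperedges of `F`. -/
def DegreeLE (F : Finset (κ × Finset U)) (d : ℕ → ℝ) : Prop :=
  ∀ R : Finset U, R.Nonempty → (#{D ∈ F | R ⊆ D.2} : ℝ) ≤ d #R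

lemma DegreeLE.mono (hF : DegreeLE F d) (h : F' ⊆ F) : DegreeLE F' d := fun R hR =>
  (Nat.cast_le.2 (card_le_card (filter_subset_filter _ h))).trans (hF R hR)

lemma IsColourMatching.card_filter_superset_le [Fintype κ] (hF : IsColourMatching F)
    {R : Finset U} (hR : R.Nonempty) : #{D ∈ F | R ⊆ D.2} ≤ Fintype.card κ := by
  obtain ⟨u, hu⟩ := hR
  refine card_le_card_of_injOn Prod.fst (fun _ _ => mem_univ _) fun D hD D' hD' h => ?_
  obtain ⟨hDF, hRD⟩ := mem_filter.1 hD
  obtain ⟨hDF', hRD'⟩ := mem_filter.1 hD'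
  exact hF D hDF D' hDF' h u (hRD hu) (hRD' hu)

/- While some set `R` lies in at least `τ R` hyperedges, these hyperedges are split off as a
batch. -/
theorem exists_batches {ι : Type*} [DecidableEq ι] (S : ι → Finset U) {τ : Finset U → ℝ}
    (hτ : ∀ R, 0 < τ R) (F : Finset ι) :
    ∃ F' ⊆ F, ∃ Q : ι → Finset U,
      (∀ D ∈ F \ F', (Q D).Nonempty ∧ Q D ⊆ S D ∧ τ (Q D) ≤ #{D' ∈ F \ F' | Q D' = Q D}) ∧
      ∀ R : Finset U, R.Nonempty → (#{D ∈ F' | R ⊆ S D} : ℝ) < τ R := by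
  induction F using Finset.strongInduction with
  | H F ih =>
  by_cases! h : ∀ R : Finset U, R.Nonempty → (#{D ∈ F | R ⊆ S D} : ℝ) < τ R
  · exact ⟨F, Subset.rfl, fun _ => ∅, by simp, h⟩
  obtain ⟨R, hR, hdense⟩ := h
  obtain ⟨D₀, hD₀⟩ : ({D ∈ F | R ⊆ S D} : Finset ι).Nonempty :=
    card_pos.1 (mod_cast (hτ R).trans_le hdense)
  obtain ⟨hD₀F, hD₀R⟩ := mem_filter.1 hD₀
  obtain ⟨F', hF', Q, hQ, hsparse⟩ := ih {D ∈ F | ¬ R ⊆ S D}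
    (filter_ssubset.2 ⟨D₀, hD₀F, not_not.2 hD₀R⟩)
  refine ⟨F', hF'.trans (filter_subset _ _), fun D => if R ⊆ S D then R else Q D,
    fun D hD => ?_, hsparse⟩
  obtain ⟨hDF, hDF'⟩ := mem_sdiff.1 hD
  by_cases hRD : R ⊆ S D
  · simp only [hRD, if_true]
    refine ⟨hR, trivial, hdense.trans (Nat.cast_le.2 (card_le_card fun D' hD' => ?_))⟩
    obtain ⟨hD'F, hRD'⟩ := mem_filter.1 hD'
    have hD'F' : D' ∉ F' := fun h => (mem_filter.1 (hF' h)).2 hRD'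
    exact mem_filter.2 ⟨mem_sdiff.2 ⟨hD'F, hD'F'⟩, if_pos hRD'⟩
  · simp only [hRD, if_false]
    obtain ⟨hne, hsub, hsize⟩ := hQ D (mem_sdiff.2 ⟨mem_filter.2 ⟨hDF, hRD⟩, hDF'⟩)
    refine ⟨hne, hsub, hsize.trans (Nat.cast_le.2 (card_le_card fun D' hD' => ?_))⟩
    obtain ⟨hD'sdiff, hbatch⟩ := mem_filter.1 hD'
    obtain ⟨hD'filter, hD'F'⟩ := mem_sdiff.1 hD'sdiff
    obtain ⟨hD'F, hRD'⟩ := mem_filter.1 hD'filter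
    exact mem_filter.2 ⟨mem_sdiff.2 ⟨hD'F, hD'F'⟩, (if_neg hRD').trans hbatch⟩

variable [DecidableEq κ]

/-- The pairs of hyperedges in the same batch such that the first one has colour `i` and contains
`A`, and the second one contains `A'` outside of its batch set. -/
def batchPairs (F : Finset (κ × Finset U)) (Q : κ × Finset U → Finset U) (i : κ)
    (A A' : Finset U) : Finset ((κ × Finset U) × (κ × Finset U)) :=
  {e ∈ F ×ˢ F | Q e.1 = Q e.2 ∧ e.1.1 = i ∧ A ⊆ e.1.2 ∧ A' ⊆ e.2.2 \ Q e.2}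

lemma mem_batchPairs {e : (κ × Finset U) × (κ × Finset U)} : e ∈ batchPairs F Q i A A' ↔
    e.1 ∈ F ∧ e.2 ∈ F ∧ Q e.1 = Q e.2 ∧ e.1.1 = i ∧ A ⊆ e.1.2 ∧ A' ⊆ e.2.2 \ Q e.2 := by
  rw [batchPairs, mem_filter, mem_product, and_assoc]

lemma card_batchPairs_filter_fst_le (hQ : IsBatching Q t F) (ht : 0 < t) (hd : DegreeLE F d)
    (hd0 : ∀ s, 0 ≤ d s) (D : κ × Finset U) :
    (#{e ∈ batchPairs F Q i A A' | e.1 = D} : ℝ) ≤ d (t + #A') := by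
  obtain hempty | ⟨e, he⟩ :=
    ({e ∈ batchPairs F Q i A A' | e.1 = D} : Finset _).eq_empty_or_nonempty
  · simpa [hempty] using hd0 _
  obtain ⟨hemem, rfl⟩ := mem_filter.1 he
  obtain ⟨hD, -, hbatch, -, -, hA'⟩ := mem_batchPairs.1 hemem
  have hcard : #(Q e.1 ∪ A') = t + #A' := by
    rw [card_union_of_disjoint (hbatch ▸ (subset_sdiff.1 hA').2.symm), hQ.card_eq _ hD]
  rw [← hcard]
  refine le_trans (Nat.cast_le.2 ?_) (hd (Q e.1 ∪ A') ((hQ.nonempty ht hD).mono subset_union_left))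
  refine card_le_card_of_injOn Prod.snd (fun e' he' => ?_) fun e' he' e'' he'' h =>
    Prod.ext ((mem_filter.1 he').2.trans (mem_filter.1 he'').2.symm) h
  obtain ⟨hmem', hfst⟩ := mem_filter.1 he'
  obtain ⟨-, hD', hbatch', -, -, hsub⟩ := mem_batchPairs.1 hmem'
  refine mem_filter.2 ⟨hD', union_subset ?_ (hsub.trans sdiff_subset)⟩
  rw [← hfst, hbatch']
  exact hQ.subset _ hD'

lemma card_batchPairs_le_of_left_nonempty (hF : IsColourMatching F) (hQ : IsBatching Q t F)
    (ht : 0 < t) (hd : DegreeLE F d) (hd0 : ∀ s, 0 ≤ d s) (hA : A.Nonempty) :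
    (#(batchPairs F Q i A A') : ℝ) ≤ d (t + #A') := by
  obtain hempty | ⟨e, he⟩ := (batchPairs F Q i A A').eq_empty_or_nonempty
  · simpa [hempty] using hd0 _
  obtain ⟨hD, -, -, hcol, hAe, -⟩ := mem_batchPairs.1 he
  obtain ⟨u, hu⟩ := hA
  rw [← filter_true_of_mem (s := batchPairs F Q i A A') (p := fun e' => e'.1 = e.1)]
  · exact card_batchPairs_filter_fst_le hQ ht hd hd0 e.1
  · intro e' he'
    obtain ⟨hD', -, -, hcol', hAe', -⟩ := mem_batchPairs.1 he'
    exact hF _ hD' _ hD (hcol'.trans hcol.symm) u (hAe' hu) (hAe hu)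

lemma card_batchPairs_le_of_right_nonempty (hF : IsColourMatching F) (hQ : IsBatching Q t F)
    (ht : 0 < t) (hd : DegreeLE F d) (hA' : A'.Nonempty) :
    (#(batchPairs F Q i A A') : ℝ) ≤ d #A' := by
  refine le_trans (Nat.cast_le.2 ?_) (hd A' hA')
  refine card_le_card_of_injOn Prod.snd (fun e he => ?_) fun e he e' he' h => Prod.ext ?_ h
  · obtain ⟨-, hD, -, -, -, hsub⟩ := mem_batchPairs.1 he
    exact mem_filter.2 ⟨hD, hsub.trans sdiff_subset⟩
  · obtain ⟨hD, -, hbatch, hcol, -⟩ := mem_batchPairs.1 he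
    obtain ⟨hD', -, hbatch', hcol', -⟩ := mem_batchPairs.1 he'
    exact hF.eq_of_batch_eq hQ ht hD hD' (hcol.trans hcol'.symm)
      (hbatch.trans ((congrArg Q h).trans hbatch'.symm))

lemma card_batchPairs_le_card_mul [Fintype U] (hF : IsColourMatching F) (hQ : IsBatching Q t F)
    (ht : 0 < t) (hd : DegreeLE F d) (hd0 : ∀ s, 0 ≤ d s) :
    (#(batchPairs F Q i A A') : ℝ) ≤ Fintype.card U * d (t + #A') := by
  have hfst : ∀ e ∈ batchPairs F Q i A A', e.1 ∈ ({D ∈ F | D.1 = i} : Finset _) := fun e he => by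
    obtain ⟨hD, -, -, hcol, -⟩ := mem_batchPairs.1 he
    exact mem_filter.2 ⟨hD, hcol⟩
  calc (#(batchPairs F Q i A A') : ℝ)
      = ∑ D ∈ F with D.1 = i, (#{e ∈ batchPairs F Q i A A' | e.1 = D} : ℝ) :=
        mod_cast card_eq_sum_card_fiberwise hfst
    _ ≤ #{D ∈ F | D.1 = i} • d (t + #A') :=
        sum_le_card_nsmul _ _ _ fun D _ => card_batchPairs_filter_fst_le hQ ht hd hd0 D
    _ ≤ Fintype.card U * d (t + #A') := by
        rw [nsmul_eq_mul]
        gcongr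
        · exact hd0 _
        · exact hF.card_filter_colour_le
            (fun D hD => (hQ.nonempty ht hD).mono (hQ.subset D hD)) i

variable [Fintype U] {p L : ℝ} {q : ℕ}

theorem card_batchPairs_le (hF : IsColourMatching F) (hQ : IsBatching Q t F) (ht : 0 < t)
    (hL : 0 ≤ L) (hd : DegreeLE F fun s => L * degreeThreshold (Fintype.card U) p s)
    (hp : 0 ≤ p) (hp1 : p ≤ 1) (hnp : 1 ≤ (Fintype.card U : ℝ) ^ 2 * p ^ q)
    (hA : 2 * #A ≤ q) (hA' : 2 * #A' ≤ q) (htA : t + #A + #A' ≤ q) :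
    (#(batchPairs F Q i A A') : ℝ) ≤
      L * (degreeThreshold (Fintype.card U) p t * Fintype.card U * p ^ (#A + #A')) := by
  have hd0 : ∀ s, 0 ≤ L * degreeThreshold (Fintype.card U) p s := fun s =>
    mul_nonneg hL (zero_le_one.trans one_le_degreeThreshold)
  obtain rfl | hAne := A.eq_empty_or_nonempty
  · obtain rfl | hA'ne := A'.eq_empty_or_nonempty
    · refine (card_batchPairs_le_card_mul hF hQ ht hd hd0).trans_eq ?_
      simp only [card_empty, add_zero, pow_zero, mul_one]
      ring
    · refine (card_batchPairs_le_of_right_nonempty hF hQ ht hd hA'ne).trans ?_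
      rw [card_empty, zero_add]
      gcongr
      exact degreeThreshold_le_mul_pow (by positivity) hp hp1 hnp hA'
  · refine (card_batchPairs_le_of_left_nonempty hF hQ ht hd hd0 hAne).trans ?_
    gcongr
    exact degreeThreshold_add_le_mul_pow (by positivity) hp hp1 hnp hA htA

end ColouredHypergraph

section SwapWord

variable {κ U ρ M : Type*} [DecidableEq ρ]

/-- The word with the letters of `c e.1` in the positions `S` and those of `c e.2` elsewhere. -/
def swapWord (c : κ × Finset U → ρ → U) (S : Finset ρ)
    (e : (κ × Finset U) × (κ × Finset U)) : ρ → U :=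
  S.piecewise (c e.1) (c e.2)

variable [Fintype ρ] {c : κ × Finset U → ρ → U} {S : Finset ρ}
  {e : (κ × Finset U) × (κ × Finset U)}

lemma swapWord_compl_eq_swapWord_swap : swapWord c Sᶜ e = swapWord c S e.swap :=
  piecewise_compl _ _ _

lemma sum_swapWord_add_sum_swapWord_compl [AddCommMonoid M] (g : U → M) :
    ∑ r, g (swapWord c S e r) + ∑ r, g (swapWord c Sᶜ e r) =
      ∑ r, g (c e.1 r) + ∑ r, g (c e.2 r) := by
  simp only [← sum_add_distrib]
  refine sum_congr rfl fun r _ => ?_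
  by_cases hr : r ∈ S
  · simp [swapWord, hr]
  · simp [swapWord, hr, add_comm]

end SwapWord

section Enumeration

variable {κ U ρ M : Type*} [DecidableEq U] [Fintype ρ]

/-- For each hyperedge `D` of `F`, the word `c D` lists the vertices of `D` outside of its batch
set. -/
structure IsEnumeration (c : κ × Finset U → ρ → U) (Q : κ × Finset U → Finset U)
    (F : Finset (κ × Finset U)) : Prop where
  injective : ∀ D ∈ F, Function.Injective (c D)
  image_eq : ∀ D ∈ F, univ.image (c D) = D.2 \ Q D

variable {F : Finset (κ × Finset U)} {Q : κ × Finset U → Finset U} {c : κ × Finset U → ρ → U}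
  {t : ℕ} {D : κ × Finset U}

lemma IsBatching.exists_isEnumeration [Nonempty U] (hQ : IsBatching Q t F)
    (hF : ∀ D ∈ F, #D.2 = t + Fintype.card ρ) :
    ∃ c : κ × Finset U → ρ → U, IsEnumeration c Q F := by
  have hexists : ∀ D ∈ F, ∃ w : ρ → U, Function.Injective w ∧ univ.image w = D.2 \ Q D := by
    intro D hD
    have hcard : Fintype.card ρ = Fintype.card ↥(D.2 \ Q D) := by
      rw [Fintype.card_coe, card_sdiff_of_subset (hQ.subset D hD), hF D hD, hQ.card_eq D hD,
        Nat.add_sub_cancel_left]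
    let w := Fintype.equivOfCardEq hcard
    refine ⟨fun r => w r, Subtype.val_injective.comp w.injective, ?_⟩
    ext u
    simp only [mem_image, mem_univ, true_and]
    exact ⟨fun ⟨r, hr⟩ => hr ▸ (w r).2, fun hu => ⟨w.symm ⟨u, hu⟩, by simp⟩⟩
  choose! c hc using hexists
  exact ⟨c, fun D hD => (hc D hD).1, fun D hD => (hc D hD).2⟩

lemma IsEnumeration.mem_sdiff (hc : IsEnumeration c Q F) (hD : D ∈ F) (r : ρ) :
    c D r ∈ D.2 \ Q D :=
  hc.image_eq D hD ▸ mem_image_of_mem _ (mem_univ r)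

lemma IsEnumeration.image_subset_sdiff (hc : IsEnumeration c Q F) (hD : D ∈ F) {T : Finset ρ}
    {w : ρ → U} (h : ∀ r ∈ T, c D r = w r) : T.image w ⊆ D.2 \ Q D :=
  image_subset_iff.2 fun r hr => h r hr ▸ hc.mem_sdiff hD r

lemma IsEnumeration.card_image_eq (hc : IsEnumeration c Q F) (hD : D ∈ F) {T : Finset ρ}
    {w : ρ → U} (h : ∀ r ∈ T, c D r = w r) : #(T.image w) = #T := by
  rw [← image_congr h, card_image_of_injective _ (hc.injective D hD)]

lemma IsEnumeration.sum_add_sum_batch [AddCommMonoid M] (hc : IsEnumeration c Q F)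
    (hQ : IsBatching Q t F) (hD : D ∈ F) (g : U → M) :
    ∑ r, g (c D r) + ∑ u ∈ Q D, g u = ∑ u ∈ D.2, g u := by
  rw [← sum_sdiff (hQ.subset D hD), ← hc.image_eq D hD,
    sum_image (hc.injective D hD).injOn]

end Enumeration

section BatchMates

variable {κ U ρ : Type*} [DecidableEq κ] [DecidableEq U] {F : Finset (κ × Finset U)}
  {Q : κ × Finset U → Finset U} {e : (κ × Finset U) × (κ × Finset U)}

/-- The pairs of distinct hyperedges in the same batch. -/
def batchMates (F : Finset (κ × Finset U)) (Q : κ × Finset U → Finset U) :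
    Finset ((κ × Finset U) × (κ × Finset U)) :=
  {e ∈ F ×ˢ F | Q e.1 = Q e.2 ∧ e.1 ≠ e.2}

lemma mem_batchMates : e ∈ batchMates F Q ↔ e.1 ∈ F ∧ e.2 ∈ F ∧ Q e.1 = Q e.2 ∧ e.1 ≠ e.2 := by
  rw [batchMates, mem_filter, mem_product, and_assoc]

lemma swap_mem_batchMates (he : e ∈ batchMates F Q) : e.swap ∈ batchMates F Q := by
  obtain ⟨h₁, h₂, hbatch, hne⟩ := mem_batchMates.1 he
  exact mem_batchMates.2 ⟨h₂, h₁, hbatch.symm, hne.symm⟩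

lemma card_mul_half_le_card_batchMates {b : ℝ} (hb : 2 ≤ b)
    (hsize : ∀ D ∈ F, b ≤ #{D' ∈ F | Q D' = Q D}) : #F * (b / 2) ≤ #(batchMates F Q) := by
  have hmates : ∀ D ∈ F, b / 2 ≤ #{D' ∈ F | Q D = Q D' ∧ D ≠ D'} := by
    intro D hD
    have herase : ({D' ∈ F | Q D = Q D' ∧ D ≠ D'} : Finset _) = {D' ∈ F | Q D' = Q D}.erase D := by
      ext D'
      simp only [mem_filter, mem_erase]
      tauto
    have hcard := card_erase_add_one (mem_filter.2 ⟨hD, rfl⟩ : D ∈ {D' ∈ F | Q D' = Q D})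
    rw [← herase, ← Nat.cast_inj (R := ℝ), Nat.cast_add_one] at hcard
    linarith [hsize D hD]
  calc #F * (b / 2) = #F • (b / 2) := (nsmul_eq_mul _ _).symm
    _ ≤ ∑ D ∈ F, (#{D' ∈ F | Q D = Q D' ∧ D ≠ D'} : ℝ) := card_nsmul_le_sum _ _ _ hmates
    _ = #(batchMates F Q) := by
        simp only [batchMates, card_filter, sum_product, Nat.cast_sum]

variable [Fintype ρ] [DecidableEq ρ] {c : κ × Finset U → ρ → U} {S T : Finset ρ} {w : ρ → U} {i : κ}

lemma card_filter_snd_swapWord :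
    #{e ∈ batchMates F Q | e.2.1 = i ∧ ∀ r ∈ T, swapWord c S e r = w r} =
      #{e ∈ batchMates F Q | e.1.1 = i ∧ ∀ r ∈ T, swapWord c Sᶜ e r = w r} := by
  refine card_nbij' Prod.swap Prod.swap ?_ ?_ (fun _ _ => rfl) fun _ _ => rfl
  · intro e he
    obtain ⟨hmates, h⟩ := mem_filter.1 he
    exact mem_filter.2 ⟨swap_mem_batchMates hmates, by
      rwa [swapWord_compl_eq_swapWord_swap, Prod.swap_swap]⟩
  · intro e he
    obtain ⟨hmates, h⟩ := mem_filter.1 he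
    exact mem_filter.2 ⟨swap_mem_batchMates hmates, by rwa [← swapWord_compl_eq_swapWord_swap]⟩

variable [Fintype U] {p L : ℝ} {q t : ℕ}

lemma card_filter_fst_swapWord_le (hF : IsColourMatching F) (hQ : IsBatching Q t F)
    (hc : IsEnumeration c Q F) (ht : 0 < t) (hL : 0 ≤ L)
    (hd : DegreeLE F fun s => L * degreeThreshold (Fintype.card U) p s) (hp : 0 ≤ p) (hp1 : p ≤ 1)
    (hnp : 1 ≤ (Fintype.card U : ℝ) ^ 2 * p ^ q) (hS : 2 * #S ≤ q) (hS' : 2 * #Sᶜ ≤ q)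
    (htρ : t + Fintype.card ρ ≤ q) :
    (#{e ∈ batchMates F Q | e.1.1 = i ∧ ∀ r ∈ T, swapWord c S e r = w r} : ℝ) ≤
      L * (degreeThreshold (Fintype.card U) p t * Fintype.card U * p ^ #T) := by
  set B := {e ∈ batchMates F Q | e.1.1 = i ∧ ∀ r ∈ T, swapWord c S e r = w r}
  have hB : ∀ e ∈ B, e ∈ batchMates F Q ∧ e.1.1 = i ∧ (∀ r ∈ T ∩ S, c e.1 r = w r) ∧
      ∀ r ∈ T \ S, c e.2 r = w r := by
    intro e he
    obtain ⟨hmates, hcol, hword⟩ := mem_filter.1 he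
    refine ⟨hmates, hcol, fun r hr => ?_, fun r hr => ?_⟩
    · rw [← hword r (mem_inter.1 hr).1, swapWord, piecewise_eq_of_mem _ _ _ (mem_inter.1 hr).2]
    · obtain ⟨hrT, hrS⟩ := mem_sdiff.1 hr
      rw [← hword r hrT, swapWord, piecewise_eq_of_notMem _ _ _ hrS]
  have hsub : B ⊆ batchPairs F Q i ((T ∩ S).image w) ((T \ S).image w) := by
    intro e he
    obtain ⟨hmates, hcol, hword, hword'⟩ := hB e he
    obtain ⟨h₁, h₂, hbatch, -⟩ := mem_batchMates.1 hmates
    exact mem_batchPairs.2 ⟨h₁, h₂, hbatch, hcol,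
      (hc.image_subset_sdiff h₁ hword).trans sdiff_subset, hc.image_subset_sdiff h₂ hword'⟩
  obtain hempty | ⟨e, he⟩ := B.eq_empty_or_nonempty
  · rw [hempty, card_empty, Nat.cast_zero]
    have := zero_le_one.trans (one_le_degreeThreshold (n := Fintype.card U) (p := p) (s := t))
    positivity
  obtain ⟨hmates, -, hword, hword'⟩ := hB e he
  obtain ⟨h₁, h₂, -⟩ := mem_batchMates.1 hmates
  have hcard := hc.card_image_eq h₁ hword
  have hcard' := hc.card_image_eq h₂ hword'
  have hT : #(T ∩ S) + #(T \ S) = #T := card_inter_add_card_sdiff T S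
  have hTS : #(T ∩ S) ≤ #S := card_le_card inter_subset_right
  have hTS' : #(T \ S) ≤ #Sᶜ := card_le_card fun r hr => mem_compl.2 (mem_sdiff.1 hr).2
  have hTρ := card_le_univ T
  calc (#B : ℝ) ≤ #(batchPairs F Q i ((T ∩ S).image w) ((T \ S).image w)) :=
        Nat.cast_le.2 (card_le_card hsub)
    _ ≤ _ := card_batchPairs_le hF hQ ht hL hd hp hp1 hnp (by omega) (by omega) (by omega)
    _ = _ := by rw [hcard, hcard', hT]

lemma sum_overlapWeight_swapWord_le (hF : IsColourMatching F) (hQ : IsBatching Q t F)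
    (hc : IsEnumeration c Q F) (ht : 0 < t) (hL : 0 ≤ L)
    (hd : DegreeLE F fun s => L * degreeThreshold (Fintype.card U) p s) (hp : 0 ≤ p) (hp1 : p ≤ 1)
    (hnp : 1 ≤ (Fintype.card U : ℝ) ^ 2 * p ^ q) (hS : 2 * #S ≤ q) (hS' : 2 * #Sᶜ ≤ q)
    (htρ : t + Fintype.card ρ ≤ q) :
    ∑ e ∈ batchMates F Q with i ∈ ({e.1.1, e.2.1} : Finset κ),
        overlapWeight p (swapWord c S e) w ≤
      2 ^ Fintype.card ρ * (2 * (L * (degreeThreshold (Fintype.card U) p t * Fintype.card U)) *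
        p ^ Fintype.card ρ) := by
  refine sum_overlapWeight_le hp fun T => ?_
  have hfst := card_filter_fst_swapWord_le (i := i) (w := w) (T := T) hF hQ hc ht hL hd hp hp1 hnp
    hS hS' htρ
  have hsnd := card_filter_fst_swapWord_le (i := i) (w := w) (T := T) hF hQ hc ht hL hd hp hp1 hnp
    hS' (by rwa [compl_compl]) htρ
  rw [← card_filter_snd_swapWord] at hsnd
  have hsplit : ({e ∈ {e ∈ batchMates F Q | i ∈ ({e.1.1, e.2.1} : Finset κ)} |
        ∀ r ∈ T, swapWord c S e r = w r} : Finset _) ⊆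
      {e ∈ batchMates F Q | e.1.1 = i ∧ ∀ r ∈ T, swapWord c S e r = w r} ∪
        {e ∈ batchMates F Q | e.2.1 = i ∧ ∀ r ∈ T, swapWord c S e r = w r} := by
    intro e he
    simp only [mem_filter, mem_insert, mem_singleton, mem_union] at he ⊢
    tauto
  have hcard := Nat.cast_le (α := ℝ).2 ((card_le_card hsplit).trans (card_union_le _ _))
  push_cast at hcard
  linarith

end BatchMates

section DecodingFamily

lemma natLog_card_fun_fun_le (ρ σ U : Type*) [Fintype ρ] [DecidableEq ρ] [Fintype σ] [DecidableEq σ]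
    [Fintype U] : (Nat.log 2 (Fintype.card (ρ → σ → U)) : ℝ) ≤
      Fintype.card ρ * Fintype.card σ * Real.logb 2 (Fintype.card U) := by
  refine (Real.natLog_le_logb _ 2).trans_eq ?_
  simp only [Fintype.card_fun, Nat.cast_pow, Real.logb_pow, Nat.cast_ofNat]
  ring

variable {κ U R : Type*} [DecidableEq κ]

/-- A family of coloured `q`-element sets of vertices, disjoint within each colour, on each of which
`g` sums to the unit vector of the colour. A code `E` enters through its values
`g u i = E (Pi.single i 1) u` on the unit messages. -/
structure IsDecodingFamily [Ring R] (q : ℕ) (g : U → κ → R) (F : Finset (κ × Finset U)) :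
    Prop where
  card_eq : ∀ D ∈ F, #D.2 = q
  isColourMatching : IsColourMatching F
  sum_eq : ∀ D ∈ F, ∑ u ∈ D.2, g u = Pi.single D.1 1

variable [Ring R] {q t : ℕ} {g : U → κ → R} {F F' : Finset (κ × Finset U)}

lemma IsDecodingFamily.mono (hF : IsDecodingFamily q g F) (h : F' ⊆ F) :
    IsDecodingFamily q g F' where
  card_eq D hD := hF.card_eq D (h hD)
  isColourMatching := hF.isColourMatching.mono h
  sum_eq D hD := hF.sum_eq D (h hD)

variable [DecidableEq U] {Q : κ × Finset U → Finset U} [CharP R 2]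

section Words

variable {ρ : Type*} [Fintype ρ] [DecidableEq ρ] {c : κ × Finset U → ρ → U} {S : Finset ρ}

/- The two swapped words together spell `D` and `D'` without the common batch set, which cancels in
characteristic two. -/
lemma IsDecodingFamily.sum_swapWord_apply_eq_iff (hF : IsDecodingFamily q g F)
    (hQ : IsBatching Q t F) (ht : 0 < t) (hc : IsEnumeration c Q F)
    {e : (κ × Finset U) × (κ × Finset U)} (he : e ∈ batchMates F Q) (i : κ) :
    (∑ r, g (swapWord c S e r)) i = (∑ r, g (swapWord c Sᶜ e r)) i ↔
      i ∉ ({e.1.1, e.2.1} : Finset κ) := by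
  obtain ⟨h₁, h₂, hbatch, hne⟩ := mem_batchMates.1 he
  have hcol : e.1.1 ≠ e.2.1 := fun h =>
    hne (hF.isColourMatching.eq_of_batch_eq hQ ht h₁ h₂ h hbatch)
  have hsum : (∑ r, g (swapWord c S e r)) i + (∑ r, g (swapWord c Sᶜ e r)) i =
      Pi.single (M := fun _ => R) e.1.1 1 i + Pi.single (M := fun _ => R) e.2.1 1 i := by
    rw [← hF.sum_eq _ h₁, ← hF.sum_eq _ h₂, ← hc.sum_add_sum_batch hQ h₁,
      ← hc.sum_add_sum_batch hQ h₂, ← hbatch, Pi.add_apply, Pi.add_apply, add_add_add_comm,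
      CharTwo.add_self_eq_zero, add_zero, ← Pi.add_apply, ← Pi.add_apply,
      sum_swapWord_add_sum_swapWord_compl]
  have : Nontrivial R := CharP.nontrivial_of_char_ne_one (v := 2) (by norm_num)
  rw [← CharTwo.add_eq_zero, hsum, Pi.single_apply, Pi.single_apply, mem_insert, mem_singleton]
  rcases eq_or_ne i e.1.1 with rfl | h
  · simp [hcol]
  · simp [h]

variable {σ : Type*} [Fintype U] [Nonempty U] [Fintype σ] [DecidableEq σ] [Nonempty σ]

theorem IsDecodingFamily.card_batchMates_le (hF : IsDecodingFamily q g F) (hQ : IsBatching Q t F)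
    (ht : 0 < t) (hc : IsEnumeration c Q F) (hS : 2 * #S ≤ q) (hS' : 2 * #Sᶜ ≤ q)
    (htρ : t + Fintype.card ρ ≤ q) (hσ : Fintype.card σ ≤ Fintype.card U)
    (hnp : 1 ≤ (Fintype.card U : ℝ) ^ 2 * (Fintype.card σ / Fintype.card U) ^ q) {L : ℝ}
    (hL : 0 < L) (hd : DegreeLE F fun s =>
      L * degreeThreshold (Fintype.card U) (Fintype.card σ / Fintype.card U) s) :
    (#(batchMates F Q) : ℝ) ≤ 2 ^ (Fintype.card ρ + 6) *
      (L * (degreeThreshold (Fintype.card U) (Fintype.card σ / Fintype.card U) t *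
        Fintype.card U)) * Nat.log 2 (Fintype.card (ρ → σ → U)) := by
  set p : ℝ := Fintype.card σ / Fintype.card U
  set W : ℝ := L * (degreeThreshold (Fintype.card U) p t * Fintype.card U)
  have hp : 0 < p := by positivity
  have hp1 : p ≤ 1 := div_le_one_of_le₀ (mod_cast hσ) (by positivity)
  have hW : 0 < W := by
    have := zero_lt_one.trans_le (one_le_degreeThreshold (n := Fintype.card U) (p := p) (s := t))
    positivity
  have hword : ∀ S : Finset ρ, 2 * #S ≤ q → 2 * #Sᶜ ≤ q → ∀ e ∈ batchMates F Q,
      ∑ i ∈ {e.1.1, e.2.1}, ∑ e' ∈ batchMates F Q with i ∈ ({e'.1.1, e'.2.1} : Finset κ),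
        overlapWeight p (swapWord c S e') (swapWord c S e) ≤
      2 * (2 ^ Fintype.card ρ * (2 * W * p ^ Fintype.card ρ)) := by
    intro S hS hS' e _
    refine (sum_le_card_nsmul _ _ _ fun i _ => sum_overlapWeight_swapWord_le hF.isColourMatching hQ
      hc ht hL.le hd hp.le hp1 hnp hS hS' htρ).trans ?_
    rw [nsmul_eq_mul]
    gcongr
    exact_mod_cast card_le_two
  have hkikuchi := card_mul_pow_le_of_sum_overlapWeight_le (σ := σ) (P := batchMates F Q)
    (src := swapWord c S) (dst := swapWord c Sᶜ) (cols := fun e => {e.1.1, e.2.1}) g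
    (fun e he h => (hF.sum_swapWord_apply_eq_iff hQ ht hc he e.1.1).1 (congrFun h _)
      (mem_insert_self _ _))
    (fun e he i => not_imp_comm.1 (hF.sum_swapWord_apply_eq_iff hQ ht hc he i).2)
    (by positivity) (hword S hS hS') (hword Sᶜ hS' (by rwa [compl_compl]))
  refine le_of_mul_le_mul_right (hkikuchi.trans_eq ?_) (pow_pos hp (Fintype.card ρ))
  ring

end Words

variable [Fintype U] {m : ℕ} {b : ℝ}

theorem IsDecodingFamily.card_le_of_isBatching [Nonempty U] (hF : IsDecodingFamily q g F)
    (hQ : IsBatching Q t F) (ht : 0 < t) (htq : t ≤ q) (hm : 0 < m) (hmn : m ≤ Fintype.card U)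
    (hnp : 1 ≤ (Fintype.card U : ℝ) ^ 2 * (m / Fintype.card U) ^ q) (hb : 2 ≤ b)
    (hd : DegreeLE F fun s =>
      2 * b * degreeThreshold (Fintype.card U) (m / Fintype.card U) s)
    (hsize : ∀ D ∈ F, b * degreeThreshold (Fintype.card U) (m / Fintype.card U) t ≤
      #{D' ∈ F | Q D' = Q D}) :
    (#F : ℝ) ≤ 2 ^ (q + 8) * q * Fintype.card U * m * Real.logb 2 (Fintype.card U) := by
  obtain ⟨h, rfl⟩ := Nat.exists_eq_add_of_le htq
  set θ := degreeThreshold (Fintype.card U) (m / Fintype.card U) t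
  have hθ : 1 ≤ θ := one_le_degreeThreshold
  have : Nonempty (Fin m) := ⟨⟨0, hm⟩⟩
  obtain ⟨c, hc⟩ := hQ.exists_isEnumeration (ρ := Fin h) (by simpa using hF.card_eq)
  obtain ⟨S, -, hS⟩ := exists_subset_card_eq (s := (univ : Finset (Fin h))) (n := (h + 1) / 2)
    (by rw [card_univ, Fintype.card_fin]; omega)
  have hScompl : #Sᶜ = h - (h + 1) / 2 := by rw [card_compl, hS, Fintype.card_fin]
  have hupper := hF.card_batchMates_le (σ := Fin m) (S := S) (L := 2 * b) hQ ht hc (by omega)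
    (by omega) (by simp) (by simpa using hmn) (by simpa using hnp) (by positivity)
    (by simpa using hd)
  have hlower := card_mul_half_le_card_batchMates (by nlinarith) hsize
  simp only [Fintype.card_fin] at hupper
  have hlog : 0 ≤ Real.logb 2 (Fintype.card U) :=
    Real.logb_nonneg one_lt_two (mod_cast Fintype.card_pos)
  have hbθ : 0 < b * θ / 2 := by positivity
  refine le_of_mul_le_mul_right ((hlower.trans hupper).trans ?_) hbθ
  calc 2 ^ (h + 6) * (2 * b * (θ * Fintype.card U)) * Nat.log 2 (Fintype.card (Fin h → Fin m → U))
      ≤ 2 ^ (h + 6) * (2 * b * (θ * Fintype.card U)) *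
          (h * m * Real.logb 2 (Fintype.card U)) := by
        gcongr
        simpa using natLog_card_fun_fun_le (Fin h) (Fin m) U
    _ = 2 ^ (h + 8) * h * Fintype.card U * m * Real.logb 2 (Fintype.card U) * (b * θ / 2) := by
        ring
    _ ≤ 2 ^ (t + h + 8) * (t + h : ℕ) * Fintype.card U * m * Real.logb 2 (Fintype.card U) *
          (b * θ / 2) := by
        gcongr <;> norm_num

theorem IsDecodingFamily.exists_subset_degreeLE [Nonempty U] (hF : IsDecodingFamily q g F)
    (hm : 0 < m) (hmn : m ≤ Fintype.card U)
    (hnp : 1 ≤ (Fintype.card U : ℝ) ^ 2 * (m / Fintype.card U) ^ q) (hb : 2 ≤ b)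
    (hd : DegreeLE F fun s => 2 * b * degreeThreshold (Fintype.card U) (m / Fintype.card U) s) :
    ∃ F' ⊆ F, DegreeLE F'
        (fun s => b * degreeThreshold (Fintype.card U) (m / Fintype.card U) s) ∧
      (#F : ℝ) ≤ #F' +
        q * (2 ^ (q + 8) * q * Fintype.card U * m * Real.logb 2 (Fintype.card U)) := by
  have hθ : ∀ s, 1 ≤ degreeThreshold (Fintype.card U) (m / Fintype.card U) s :=
    fun s => one_le_degreeThreshold
  obtain ⟨F', hF', Q, hQ, hsparse⟩ := exists_batches (Prod.snd : κ × Finset U → Finset U)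
    (τ := fun R => b * degreeThreshold (Fintype.card U) (m / Fintype.card U) #R)
    (fun R => mul_pos (by positivity) (zero_lt_one.trans_le (hθ _))) F
  refine ⟨F', hF', fun R hR => (hsparse R hR).le, ?_⟩
  have hbatch : ∀ t ∈ Icc 1 q, (#{D ∈ F \ F' | #(Q D) = t} : ℝ) ≤
      2 ^ (q + 8) * q * Fintype.card U * m * Real.logb 2 (Fintype.card U) := by
    intro t ht
    have hsub : {D ∈ F \ F' | #(Q D) = t} ⊆ F := (filter_subset _ _).trans sdiff_subset
    refine (hF.mono hsub).card_le_of_isBatching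
      ⟨fun D hD => (hQ D (mem_filter.1 hD).1).2.1, fun D hD => (mem_filter.1 hD).2⟩
      (mem_Icc.1 ht).1 (mem_Icc.1 ht).2 hm hmn hnp hb (hd.mono hsub) fun D hD => ?_
    obtain ⟨hDF, rfl⟩ := mem_filter.1 hD
    refine (hQ D hDF).2.2.trans (Nat.cast_le.2 (card_le_card fun D' hD' => ?_))
    obtain ⟨hD'F, heq⟩ := mem_filter.1 hD'
    exact mem_filter.2 ⟨mem_filter.2 ⟨hD'F, congrArg _ heq⟩, heq⟩
  have hmaps : ∀ D ∈ F \ F', #(Q D) ∈ Icc 1 q := fun D hD => by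
    obtain ⟨hne, hsub, -⟩ := hQ D hD
    rw [← hF.card_eq D (mem_sdiff.1 hD).1]
    exact mem_Icc.2 ⟨hne.card_pos, card_le_card hsub⟩
  have hsdiff : (#(F \ F') : ℝ) ≤
      q * (2 ^ (q + 8) * q * Fintype.card U * m * Real.logb 2 (Fintype.card U)) := by
    rw [card_eq_sum_card_fiberwise hmaps, Nat.cast_sum]
    exact (sum_le_card_nsmul _ _ _ hbatch).trans_eq (by simp)
  have hsplit : (#(F \ F') : ℝ) + #F' = #F := mod_cast card_sdiff_add_card_eq_card hF'
  linarith

end DecodingFamily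

section Iteration

variable {κ U R : Type*} {F : Finset (κ × Finset U)}

lemma degreeThreshold_div_one {n m : ℝ} (hn : n ≠ 0) (hm : 1 ≤ m) :
    degreeThreshold n (m / n) 1 = m := by
  rw [degreeThreshold, pow_one, mul_div_cancel₀ _ hn, max_eq_right hm]

lemma DegreeLE.card_le_card_mul [Fintype U] [DecidableEq U] {d : ℕ → ℝ} (hd : DegreeLE F d)
    (hne : ∀ D ∈ F, D.2.Nonempty) : (#F : ℝ) ≤ Fintype.card U * d 1 := by
  classical
  have hcover : F ⊆ univ.biUnion fun u => {D ∈ F | {u} ⊆ D.2} := by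
    intro D hD
    obtain ⟨u, hu⟩ := hne D hD
    exact mem_biUnion.2 ⟨u, mem_univ u, mem_filter.2 ⟨hD, singleton_subset_iff.2 hu⟩⟩
  calc (#F : ℝ) ≤ ∑ u : U, (#{D ∈ F | {u} ⊆ D.2} : ℝ) :=
        mod_cast (card_le_card hcover).trans card_biUnion_le
    _ ≤ #(univ : Finset U) • d 1 :=
        sum_le_card_nsmul _ _ _ fun u _ => by simpa using hd {u} (singleton_nonempty u)
    _ = Fintype.card U * d 1 := by rw [nsmul_eq_mul, card_univ]

variable [DecidableEq κ] [Fintype U] {q : ℕ} {g : U → κ → R}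

/- Summing the coordinate `i` of `g` over a hyperedge of colour `i` shows that the coordinates are
linearly independent. -/
lemma IsDecodingFamily.card_colours_le [Fintype κ] [CommRing R] [Nontrivial R]
    (hF : IsDecodingFamily q g F) (hcol : ∀ i, ∃ D ∈ F, D.1 = i) :
    Fintype.card κ ≤ Fintype.card U := by
  have hindep : LinearIndependent R fun i u => g u i := by
    refine Fintype.linearIndependent_iff.2 fun a ha j => ?_
    obtain ⟨D, hD, rfl⟩ := hcol j
    calc a D.1 = ∑ i, a i * (∑ u ∈ D.2, g u) i := by
          simp only [hF.sum_eq D hD, Pi.single_apply, mul_ite, mul_one, mul_zero, sum_ite_eq',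
            mem_univ, if_true]
      _ = ∑ u ∈ D.2, (∑ i, a i • fun u => g u i) u := by
          simp only [Finset.sum_apply, mul_sum, Pi.smul_apply, smul_eq_mul]
          exact sum_comm
      _ = 0 := by simp only [ha, Pi.zero_apply, sum_const_zero]
  simpa using hindep.fintype_card_le_finrank

variable {m : ℕ}

theorem IsDecodingFamily.card_le_of_degreeLE [Nonempty U] [DecidableEq U] [Ring R] [CharP R 2]
    (hF : IsDecodingFamily q g F) (hq : 0 < q) (hm : 0 < m) (hmn : m ≤ Fintype.card U)
    (hnp : 1 ≤ (Fintype.card U : ℝ) ^ 2 * (m / Fintype.card U) ^ q) (J : ℕ)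
    (hd : DegreeLE F fun s =>
      2 ^ (J + 1) * degreeThreshold (Fintype.card U) (m / Fintype.card U) s) :
    (#F : ℝ) ≤ J * (q * (2 ^ (q + 8) * q * Fintype.card U * m *
      Real.logb 2 (Fintype.card U))) + 2 * Fintype.card U * m := by
  induction J generalizing F with
  | zero =>
    have hcard := hd.card_le_card_mul fun D hD => card_pos.1 (hF.card_eq D hD ▸ hq)
    rw [degreeThreshold_div_one (by positivity) (mod_cast hm)] at hcard
    refine hcard.trans_eq ?_
    push_cast
    ring
  | succ J ih =>
    obtain ⟨F', hF', hd', hcard⟩ := hF.exists_subset_degreeLE hm hmn hnp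
      (b := 2 ^ (J + 1)) (le_self_pow₀ one_le_two J.succ_ne_zero)
      (by simpa only [← pow_succ'] using hd)
    have := ih (hF.mono hF') hd'
    push_cast
    linarith

theorem IsDecodingFamily.card_le [Finite κ] [CommRing R] [CharP R 2] (hF : IsDecodingFamily q g F)
    (hcol : ∀ i, ∃ D ∈ F, D.1 = i) (hq : 0 < q) (hn : 2 ≤ Fintype.card U) (hm : 0 < m)
    (hmn : m ≤ Fintype.card U)
    (hnp : 1 ≤ (Fintype.card U : ℝ) ^ 2 * (m / Fintype.card U) ^ q) :
    (#F : ℝ) ≤ 2 ^ (q + 9) * q ^ 2 * Fintype.card U * m * Real.logb 2 (Fintype.card U) ^ 2 := by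
  classical
  have := Fintype.ofFinite κ
  have : Nontrivial R := CharP.nontrivial_of_char_ne_one (v := 2) (by norm_num)
  have : Nonempty U := Fintype.card_pos_iff.1 (by omega)
  set n := Fintype.card U
  have hd : DegreeLE F fun s => 2 ^ (Nat.log 2 n + 1) * degreeThreshold n (m / n) s := by
    intro R hR
    have hdeg : #{D ∈ F | R ⊆ D.2} ≤ 2 ^ (Nat.log 2 n + 1) :=
      ((hF.isColourMatching.card_filter_superset_le hR).trans (hF.card_colours_le hcol)).trans
        (Nat.lt_pow_succ_log_self one_lt_two n).le
    have hdeg' : (#{D ∈ F | R ⊆ D.2} : ℝ) ≤ 2 ^ (Nat.log 2 n + 1) := mod_cast hdeg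
    exact hdeg'.trans (le_mul_of_one_le_right (by positivity) one_le_degreeThreshold)
  set ℓ := Real.logb 2 n
  have hℓ : 1 ≤ ℓ := by
    rw [Real.le_logb_iff_rpow_le one_lt_two (by positivity), Real.rpow_one]
    exact_mod_cast hn
  have hconst : (2 : ℝ) ≤ 2 ^ (q + 8) * q ^ 2 := by
    exact_mod_cast (Nat.le_self_pow (Nat.succ_ne_zero _) 2).trans
      (Nat.le_mul_of_pos_right _ (by positivity))
  calc (#F : ℝ) ≤ Nat.log 2 n * (q * (2 ^ (q + 8) * q * n * m * ℓ)) + 2 * n * m :=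
        hF.card_le_of_degreeLE hq hm hmn hnp _ hd
    _ ≤ ℓ * (q * (2 ^ (q + 8) * q * n * m * ℓ)) + 2 ^ (q + 8) * q ^ 2 * n * m * ℓ ^ 2 := by
        refine add_le_add ?_ ?_
        · gcongr
          exact Real.natLog_le_logb n 2
        · rw [mul_assoc 2, mul_assoc (2 ^ (q + 8) * q ^ 2 : ℝ)]
          exact (by gcongr : _ ≤ _).trans
            (le_mul_of_one_le_right (by positivity) (one_le_pow₀ hℓ))
    _ = 2 ^ (q + 9) * q ^ 2 * n * m * ℓ ^ 2 := by ring

end Iteration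

lemma one_le_sq_mul_div_pow {n x : ℝ} {q : ℕ} (hn : 0 < n) (hq : q ≠ 0)
    (hx : n ^ (1 - 2 / q : ℝ) ≤ x) : 1 ≤ n ^ 2 * (x / n) ^ q := by
  have hexp : (1 - 2 / q : ℝ) * q = q - (2 : ℕ) := by
    push_cast
    field_simp
  calc 1 = n ^ 2 * ((n ^ (1 - 2 / q : ℝ)) ^ q / n ^ q) := by
        rw [← Real.rpow_mul_natCast hn.le, hexp, Real.rpow_sub hn, Real.rpow_natCast,
          Real.rpow_natCast]
        field_simp
    _ ≤ n ^ 2 * (x / n) ^ q := by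
        rw [← div_pow]
        gcongr

lemma isDecodingFamily_of_sum_eq {κ U R : Type*} [Fintype κ] [DecidableEq κ] [Fintype U]
    [DecidableEq U] [Ring R] {q : ℕ} {E : (κ → R) → U → R} {H : κ → Finset (Finset U)}
    (hcard : ∀ i, ∀ C ∈ H i, #C = q)
    (hmatch : ∀ i, ∀ C ∈ H i, ∀ C' ∈ H i, C ≠ C' → Disjoint C C')
    (hdec : ∀ b i, ∀ C ∈ H i, ∑ u ∈ C, E b u = b i) :
    IsDecodingFamily q (fun u i => E (Pi.single i 1) u) {D : κ × Finset U | D.2 ∈ H D.1} where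
  card_eq D hD := hcard D.1 D.2 (mem_filter.1 hD).2
  isColourMatching := by
    rintro ⟨i, C⟩ hC ⟨_, C'⟩ hC' rfl u hu hu'
    by_contra hne
    exact disjoint_left.1 (hmatch i C (mem_filter.1 hC).2 C' (mem_filter.1 hC').2
      fun h => hne (h ▸ rfl)) hu hu'
  sum_eq D hD := by
    ext i
    rw [Finset.sum_apply, hdec _ _ _ (mem_filter.1 hD).2, Pi.single_apply, Pi.single_apply]
    simp only [eq_comm]

theorem stmt1_general {κ U R : Type*} [Fintype κ] [Fintype U] [CommRing R] [CharP R 2] {q : ℕ}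
    (hq : 2 ≤ q) (hn : 2 ≤ Fintype.card U) {δ : ℝ} (hδ : 0 < δ) (E : (κ → R) → U → R)
    (H : κ → Finset (Finset U)) (hcard : ∀ i, ∀ C ∈ H i, #C = q)
    (hmatch : ∀ i, ∀ C ∈ H i, ∀ C' ∈ H i, C ≠ C' → Disjoint C C')
    (hsize : ∀ i, δ * Fintype.card U ≤ #(H i))
    (hdec : ∀ b i, ∀ C ∈ H i, ∑ u ∈ C, E b u = b i) :
    (Fintype.card κ : ℝ) ≤ 2 ^ (q + 10) * q ^ 2 / Real.log 2 ^ 2 * δ⁻¹ *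
      Fintype.card U ^ (1 - 2 / q : ℝ) * Real.log (Fintype.card U) ^ 2 := by
  classical
  have : Nonempty U := Fintype.card_pos_iff.1 (by omega)
  set n := Fintype.card U
  set N : ℝ := (n : ℝ) ^ (1 - 2 / q : ℝ)
  set F : Finset (κ × Finset U) := {D | D.2 ∈ H D.1}
  have hn1 : (1 : ℝ) ≤ n := mod_cast one_le_two.trans hn
  have hn0 : (0 : ℝ) < n := by positivity
  have hN : 1 ≤ N := Real.one_le_rpow hn1 (sub_nonneg.2 (div_le_one_of_le₀ (mod_cast hq)
    (by positivity)))
  have hNn : N ≤ n := Real.rpow_le_self_of_one_le hn1 (sub_le_self _ (by positivity))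
  have hcol : ∀ i, ∃ D ∈ F, D.1 = i := by
    intro i
    have hpos : 0 < #(H i) := by exact_mod_cast (mul_pos hδ hn0).trans_le (hsize i)
    obtain ⟨C, hC⟩ := card_pos.1 hpos
    exact ⟨(i, C), mem_filter.2 ⟨mem_univ _, hC⟩, rfl⟩
  have hlower : Fintype.card κ * (δ * n) ≤ #F := by
    calc (Fintype.card κ * (δ * n) : ℝ) = ∑ _i : κ, δ * n := by
          rw [sum_const, card_univ, nsmul_eq_mul]
      _ ≤ ∑ i, (#(H i) : ℝ) := sum_le_sum fun i _ => hsize i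
      _ = #F := by
          rw [card_filter, ← univ_product_univ, sum_product]
          simp
  have hupper := (isDecodingFamily_of_sum_eq hcard hmatch hdec).card_le hcol (by omega) hn
    (Nat.ceil_pos.2 (zero_lt_one.trans_le hN)) (Nat.ceil_le.2 hNn)
    (one_le_sq_mul_div_pow hn0 (by omega) (Nat.le_ceil N))
  have hceil : (⌈N⌉₊ : ℝ) ≤ 2 * N := Nat.ceil_le_two_mul (by linarith)
  refine le_of_mul_le_mul_right ((hlower.trans hupper).trans ?_) (mul_pos hδ hn0)
  calc _ ≤ 2 ^ (q + 9) * q ^ 2 * n * (2 * N) * (Real.log n / Real.log 2) ^ 2 := by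
        rw [Real.logb]
        gcongr
    _ = _ := by field_simp; ring

/-- For every odd `q ≥ 3` there is a constant `A > 0` (depending only
on `q`) such that for every `n ≥ 2` and `δ ∈ (0,1)`: if `E : 𝔽₂^k → 𝔽₂^n` is a
linear map and `H 1, …, H k` are `q`-uniform hypergraph matchings on `[n]`, each
with at least `δn` hyperedges, such that `∑_{u ∈ C} E(b) u = b i` for all `b`,
`i`, and `C ∈ H i`, then `k ≤ A · δ⁻¹ · n^{1−2/q} · (log n)²`. -/
theorem stmt1 :
    ∀ q : ℕ, Odd q → 3 ≤ q →
    ∃ A : ℝ, 0 < A ∧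
      ∀ (n k : ℕ) (δ : ℝ), 2 ≤ n → 0 < δ → δ < 1 →
      ∀ (E : (Fin k → ZMod 2) →ₗ[ZMod 2] (Fin n → ZMod 2))
        (H : Fin k → Finset (Finset (Fin n))),
        (∀ i, ∀ C ∈ H i, C.card = q) →
        (∀ i, ∀ C ∈ H i, ∀ C' ∈ H i, C ≠ C' → Disjoint C C') →
        (∀ i, δ * (n : ℝ) ≤ ((H i).card : ℝ)) →
        (∀ (b : Fin k → ZMod 2) (i : Fin k), ∀ C ∈ H i, ∑ u ∈ C, E b u = b i) →
        (k : ℝ) ≤ A * δ⁻¹ * (n : ℝ) ^ ((1 : ℝ) - 2 / (q : ℝ)) * Real.log n ^ 2 := by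
  intro q _ hq
  refine ⟨2 ^ (q + 10) * q ^ 2 / Real.log 2 ^ 2, by positivity,
    fun n k δ hn hδ _ E H hcard hmatch hsize hdec => ?_⟩
  simpa using stmt1_general (by omega) (by simpa using hn) hδ E H hcard hmatch
    (by simpa using hsize) hdec
end

section
/- Let q ≥ 3 be an odd integer and t ∈ {1,…,q}. There is a constant A > 0 depending only on q such that the following holds for every n ≥ 2: if H is a properly hyperedge-colored, q-uniform, t-approximately strongly regular hypergraph on [n] whose average degree q·|H|/n is at least A · n^{1−2/q} · log n, then H contains a weak rainbow even cover, i.e., an even cover in which some color appears on exactly one hyperedge. -/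
open Finset

/-- An index `t ∈ {1,…,q}` is good with respect to the co-degree sequence
`d 1 ≥ ⋯ ≥ d q` (on `n` vertices) if:
(1) `d r / d t ≤ n^{1−2r/q}` for `1 ≤ r ≤ ⌈(q−t)/2⌉`;
(2) `d r / d t ≤ n^{−(2/q)(r−t)+(1/q)(t−[t even])}` for `t ≤ r ≤ ⌊(q+t)/2⌋`;
(3) `d t ≥ d 1 · n^{−(2/q)(t−1)}` if `t < q/2`, and `d t ≥ d 1 · n^{−1+2/q}`
if `t > q/2`. -/
def GoodIndex (n q : ℕ) (d : ℕ → ℝ) (t : ℕ) : Prop :=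
  (∀ r : ℕ, 1 ≤ r → r ≤ (q - t + 1) / 2 →
      d r / d t ≤ (n : ℝ) ^ ((1 : ℝ) - 2 * (r : ℝ) / (q : ℝ))) ∧
  (∀ r : ℕ, t ≤ r → r ≤ (q + t) / 2 →
      d r / d t ≤ (n : ℝ) ^ (-(2 / (q : ℝ)) * ((r : ℝ) - (t : ℝ)) +
        (1 / (q : ℝ)) * ((t : ℝ) - if Even t then 1 else 0))) ∧
  (2 * t < q → d 1 * (n : ℝ) ^ (-(2 / (q : ℝ)) * ((t : ℝ) - 1)) ≤ d t) ∧
  (q < 2 * t → d 1 * (n : ℝ) ^ (-1 + 2 / (q : ℝ)) ≤ d t)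

/-- Co-degree of a set `Q` in an indexed hypergraph: the number of hyperedges
containing `Q`. -/
def iCodeg {n : ℕ} {ι : Type} [Fintype ι] (A : ι → Finset (Fin n))
    (Q : Finset (Fin n)) : ℕ :=
  (Finset.univ.filter (fun e => Q ⊆ A e)).card

/-- `d_{H,r}`: maximum co-degree over all `r`-element subsets of `[n]`. -/
def iMaxCodeg {n : ℕ} {ι : Type} [Fintype ι] (A : ι → Finset (Fin n))
    (r : ℕ) : ℕ :=
  (Finset.univ.filter (fun Q : Finset (Fin n) => Q.card = r)).sup (iCodeg A)

/-- `t`-approximate strong regularity of an indexed hypergraph: the hyperedges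
can be partitioned into groups, each consisting of hyperedges containing a fixed
`t`-element set, each of size between `d_{H,t}/2` and `d_{H,t}`, and `t` is a
good index for the co-degree sequence. -/
def iASR {n : ℕ} {ι : Type} [Fintype ι] (q t : ℕ) (A : ι → Finset (Fin n)) : Prop :=
  ∃ (p : ℕ) (part : ι → Fin p) (Qs : Fin p → Finset (Fin n)),
    (∀ θ, (Qs θ).card = t) ∧
    (∀ e, Qs (part e) ⊆ A e) ∧
    (∀ θ, (iMaxCodeg A t : ℝ) / 2 ≤
        ((Finset.univ.filter (fun e => part e = θ)).card : ℝ) ∧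
      ((Finset.univ.filter (fun e => part e = θ)).card : ℝ) ≤ (iMaxCodeg A t : ℝ)) ∧
    GoodIndex n q (fun r => (iMaxCodeg A r : ℝ)) t

/-!
Suppose that no weak rainbow even cover exists. Fix in each hyperedge the core `Q_θ` of its part,
and form the Kikuchi graph: its vertices are the `m`-tuples of words of length `ℓ` over `[n]`,
where `m = q - t` and `ℓ` is about `n ^ (1 - 2 / q)`. A pair of hyperedges with a common core
yields many edges of this graph, along which the total parity vector of the vertex changes by the
sum of the two hyperedges, since the core cancels. Each end carries about half of the remaining
vertices of either hyperedge, so that only co-degrees of the orders controlled by a good index enter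
the estimates.

For a color `c`, reducing the parity vector modulo the span of the hyperedges of other colors
defines a partition of the vertices. An edge of the graph is cut by it only if `c` is one of its two
colors, and every edge is cut by one of these partitions, because a hyperedge lying in the span of
those of other colors would give a weak rainbow even cover. If each vertex meets at most `D` edges
of each color, then charging edges to the smaller classes bounds the number of edges by
`O(D N log N)` for `N` vertices.

The graph need not satisfy such a bound, but goodness of the index `t` makes the second moment of
the number of edges of a given color at a vertex small, so that the bound holds after discarding at
most half of the edges. Comparing with the number of pairs of hyperedges in a part of size at least
`d_{H,t} / 2` bounds `|H|`.
-/

section Charging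

variable {V ε κ : Type*}

theorem mul_logb_add_mul_logb_add_le {x y : ℝ} (hx : 0 < x) (hxy : x ≤ y) :
    x * Real.logb 2 x + y * Real.logb 2 y + x ≤ (x + y) * Real.logb 2 (x + y) := by
  have hx_log : Real.logb 2 x + 1 ≤ Real.logb 2 (x + y) := by
    have hdouble : Real.logb 2 (x * 2) = Real.logb 2 x + 1 := by
      rw [Real.logb_mul hx.ne' two_ne_zero, Real.logb_self_eq_one one_lt_two]
    rw [← hdouble]
    exact Real.logb_le_logb_of_le one_lt_two (by positivity) (by linarith)
  have hy_log : Real.logb 2 y ≤ Real.logb 2 (x + y) :=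
    Real.logb_le_logb_of_le one_lt_two (by linarith) (by linarith)
  calc x * Real.logb 2 x + y * Real.logb 2 y + x
      = x * (Real.logb 2 x + 1) + y * Real.logb 2 y := by ring
    _ ≤ x * Real.logb 2 (x + y) + y * Real.logb 2 (x + y) := by gcongr; linarith
    _ = (x + y) * Real.logb 2 (x + y) := by ring

theorem mul_logb_add_mul_logb_add_min_le {a b : ℝ} (ha : 0 < a) (hb : 0 < b) :
    a * Real.logb 2 a + b * Real.logb 2 b + min a b ≤ (a + b) * Real.logb 2 (a + b) := by
  obtain h | h := le_total a b
  · simpa only [min_eq_left h] using mul_logb_add_mul_logb_add_le ha h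
  · simpa only [min_eq_right h, add_comm] using mul_logb_add_mul_logb_add_le hb h

theorem card_le_mul_card_of_exists_end [DecidableEq V] (ends : Bool → ε → V) {X : Finset ε}
    {S : Finset V} {D : ℝ} (hS : ∀ e ∈ X, ∃ i, ends i e ∈ S)
    (hdeg : ∀ v ∈ S, (#{e ∈ X | ∃ i, ends i e = v} : ℝ) ≤ D) : (#X : ℝ) ≤ D * #S := by
  have hcount := card_nsmul_le_card_nsmul (s := X) (t := S) (fun e v => ∃ i, ends i e = v)
    (m := (1 : ℝ)) (n := D) (fun e he => ?_) hdeg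
  · simpa [mul_comm] using hcount
  · obtain ⟨i, hi⟩ := hS e he
    have hmem : ends i e ∈ bipartiteAbove (fun e v => ∃ i, ends i e = v) S e :=
      (mem_bipartiteAbove _).2 ⟨hi, i, rfl⟩
    exact_mod_cast card_pos.2 ⟨_, hmem⟩

theorem card_le_card_inside_add_card_crossing [DecidableEq V] (ends : Bool → ε → V) {W : Finset V}
    {F : Finset ε} (hW : ∀ e ∈ F, ∀ i, ends i e ∈ W) (p : V → Prop) [DecidablePred p] :
    #F ≤ #{e ∈ F | ∀ i, ends i e ∈ ({v ∈ W | p v} : Finset V)} +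
      #{e ∈ F | ∀ i, ends i e ∈ ({v ∈ W | ¬p v} : Finset V)} +
      #{e ∈ F | ¬(p (ends false e) ↔ p (ends true e))} := by
  classical
  refine (card_le_card fun e he => ?_).trans <|
    (card_union_le _ _).trans <| Nat.add_le_add_right (card_union_le _ _) _
  have := hW e he
  simp only [mem_union, mem_filter, Bool.forall_bool] at this ⊢
  tauto

theorem card_le_mul_logb_of_cuts {Ψ : κ → Type*} [DecidableEq V] [∀ c, DecidableEq (Ψ c)]
    (ends : Bool → ε → V) (ψ : ∀ c, V → Ψ c) {D : ℝ} (hD : 0 ≤ D) (W : Finset V) (F : Finset ε)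
    (hW : ∀ e ∈ F, ∀ i, ends i e ∈ W)
    (hcut : ∀ e ∈ F, ∃ c, ψ c (ends false e) ≠ ψ c (ends true e))
    (hdeg : ∀ c v,
      (#{e ∈ F | ψ c (ends false e) ≠ ψ c (ends true e) ∧ ∃ i, ends i e = v} : ℝ) ≤ D) :
    (#F : ℝ) ≤ D * (#W * Real.logb 2 #W) := by
  induction W using Finset.strongInduction generalizing F with
  | H W ih =>
  obtain rfl | ⟨e₀, he₀⟩ := F.eq_empty_or_nonempty
  · have hlog : 0 ≤ Real.logb 2 #W :=
      div_nonneg (Real.log_natCast_nonneg #W) (Real.log_nonneg one_le_two)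
    simpa using mul_nonneg hD (mul_nonneg (Nat.cast_nonneg #W) hlog)
  obtain ⟨c, hc⟩ := hcut e₀ he₀
  let p (v : V) := ψ c v = ψ c (ends false e₀)
  let inside (S : Finset V) := {e ∈ F | ∀ i, ends i e ∈ S}
  let X := {e ∈ F | ¬(p (ends false e) ↔ p (ends true e))}
  have hF : (#F : ℝ) ≤ #(inside {v ∈ W | p v}) + #(inside {v ∈ W | ¬p v}) + #X := by
    exact_mod_cast card_le_card_inside_add_card_crossing ends hW p
  have hmem (i : Bool) := hW e₀ he₀ i
  have hX (S : Finset V) (hS : ∀ e ∈ X, ∃ i, ends i e ∈ S) : (#X : ℝ) ≤ D * #S := by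
    refine card_le_mul_card_of_exists_end ends hS fun v _ => (hdeg c v).trans' ?_
    refine Nat.cast_le.2 (card_le_card fun e he => ?_)
    simp only [X, p, mem_filter] at he ⊢
    grind
  have hXp : (#X : ℝ) ≤ D * #{v ∈ W | p v} := hX _ fun e he => by
    simp only [X, mem_filter, Bool.exists_bool] at he ⊢
    grind
  have hXnp : (#X : ℝ) ≤ D * #{v ∈ W | ¬p v} := hX _ fun e he => by
    simp only [X, mem_filter, Bool.exists_bool] at he ⊢
    grind
  have hinside (S : Finset V) (hS : S ⊂ W) : (#(inside S) : ℝ) ≤ D * (#S * Real.logb 2 #S) := by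
    refine ih S hS _ (fun e he => (mem_filter.1 he).2)
      (fun e he => hcut e (mem_filter.1 he).1) fun c v => (hdeg c v).trans' ?_
    gcongr
    exact filter_subset _ _
  have hp := hinside {v ∈ W | p v} (filter_ssubset.2 ⟨_, hmem true, hc.symm⟩)
  have hnp := hinside {v ∈ W | ¬p v} (filter_ssubset.2 ⟨_, hmem false, not_not.2 rfl⟩)
  have hpos : 0 < #{v ∈ W | p v} := card_pos.2 ⟨_, mem_filter.2 ⟨hmem false, rfl⟩⟩
  have hpos' : 0 < #{v ∈ W | ¬p v} := card_pos.2 ⟨_, mem_filter.2 ⟨hmem true, hc.symm⟩⟩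
  have hadd := mul_le_mul_of_nonneg_left (mul_logb_add_mul_logb_add_min_le
    (Nat.cast_pos.2 hpos) (Nat.cast_pos.2 hpos')) hD
  rw [← Nat.cast_add, card_filter_add_card_filter_not, mul_add, mul_add,
    mul_min_of_nonneg _ _ hD] at hadd
  linarith [le_min hXp hXnp]

theorem exists_subset_card_fiber_le {α I : Type*} {K : I → Type*} [Fintype I] [Nonempty I]
    [∀ i, DecidableEq (K i)] (g : ∀ i, α → K i) (E : Finset α) {M : ℝ} (hM : 0 < M)
    (hmoment : ∀ i, ∑ x ∈ E, (#{y ∈ E | g i y = g i x} : ℝ) ≤ #E * M) :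
    ∃ F ⊆ E, (#E : ℝ) / 2 ≤ #F ∧
      ∀ i k, (#{x ∈ F | g i x = k} : ℝ) ≤ 2 * Fintype.card I * M := by
  classical
  let T : ℝ := 2 * Fintype.card I * M
  have : (0 : ℝ) < Fintype.card I := by exact_mod_cast Fintype.card_pos
  let heavy (i : I) := {x ∈ E | T < #{y ∈ E | g i y = g i x}}
  have hheavy (i : I) : (#(heavy i) : ℝ) ≤ #E / (2 * Fintype.card I) := by
    rw [le_div_iff₀ (by positivity)]
    refine le_of_mul_le_mul_right ?_ hM
    calc (#(heavy i) : ℝ) * (2 * Fintype.card I) * M = ∑ _x ∈ heavy i, T := by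
          simp only [sum_const, nsmul_eq_mul, T]; ring
      _ ≤ ∑ x ∈ heavy i, (#{y ∈ E | g i y = g i x} : ℝ) :=
          sum_le_sum fun x hx => (mem_filter.1 hx).2.le
      _ ≤ ∑ x ∈ E, (#{y ∈ E | g i y = g i x} : ℝ) :=
          sum_le_sum_of_subset_of_nonneg (filter_subset _ _) fun _ _ _ => Nat.cast_nonneg _
      _ ≤ #E * M := hmoment i
  refine ⟨E \ univ.biUnion heavy, sdiff_subset, ?_, fun i k => ?_⟩
  · have hunion : (#(univ.biUnion heavy) : ℝ) ≤ #E / 2 := by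
      calc (#(univ.biUnion heavy) : ℝ) ≤ ∑ i, (#(heavy i) : ℝ) := by
            exact_mod_cast card_biUnion_le
        _ ≤ ∑ _i : I, (#E : ℝ) / (2 * Fintype.card I) := sum_le_sum fun i _ => hheavy i
        _ = #E / 2 := by
            rw [sum_const, card_univ, nsmul_eq_mul]
            field_simp
    have hsdiff : (#E : ℝ) ≤ #(E \ univ.biUnion heavy) + #(univ.biUnion heavy) := by
      exact_mod_cast Nat.sub_le_iff_le_add.1 (le_card_sdiff _ _)
    linarith
  · obtain hempty | ⟨x, hxk⟩ := ({x ∈ E \ univ.biUnion heavy | g i x = k}).eq_empty_or_nonempty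
    · rw [hempty, card_empty, Nat.cast_zero]
      positivity
    · obtain ⟨hx, rfl⟩ := mem_filter.1 hxk
      have hlight : x ∉ heavy i := fun h => (mem_sdiff.1 hx).2 (mem_biUnion.2 ⟨i, mem_univ i, h⟩)
      have hfiber : (#{y ∈ E | g i y = g i x} : ℝ) ≤ T :=
        not_lt.1 fun h => hlight (mem_filter.2 ⟨(mem_sdiff.1 hx).1, h⟩)
      refine hfiber.trans' ?_
      gcongr
      exact sdiff_subset

theorem card_le_of_second_moment {Ψ : κ → Type*} [Fintype V] [DecidableEq V] [DecidableEq κ]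
    (ends : Bool → ε → V) (color : Bool → ε → κ) (ψ : ∀ c, V → Ψ c) (E : Finset ε) {M : ℝ}
    (hM : 0 < M)
    (hmoment : ∀ i j, ∑ x ∈ E,
      (#{y ∈ E | (color j y, ends i y) = (color j x, ends i x)} : ℝ) ≤ #E * M)
    (hcut : ∀ e ∈ E, ∃ c, ψ c (ends false e) ≠ ψ c (ends true e))
    (hcolor : ∀ e ∈ E, ∀ c, ψ c (ends false e) ≠ ψ c (ends true e) → ∃ j, color j e = c) :
    (#E : ℝ) ≤ 64 * M * (Fintype.card V * Real.logb 2 (Fintype.card V)) := by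
  classical
  obtain ⟨F, hFE, hEF, hfiber⟩ := exists_subset_card_fiber_le
    (fun (ij : Bool × Bool) x => (color ij.2 x, ends ij.1 x)) E hM fun ij => hmoment ij.1 ij.2
  have hdeg (c : κ) (v : V) :
      (#{e ∈ F | ψ c (ends false e) ≠ ψ c (ends true e) ∧ ∃ i, ends i e = v} : ℝ) ≤ 32 * M := by
    calc (#{e ∈ F | ψ c (ends false e) ≠ ψ c (ends true e) ∧ ∃ i, ends i e = v} : ℝ)
        ≤ #(univ.biUnion fun ij : Bool × Bool =>
            {e ∈ F | (color ij.2 e, ends ij.1 e) = (c, v)}) := by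
          gcongr
          intro e he
          obtain ⟨heF, hψ, i, hi⟩ := mem_filter.1 he
          obtain ⟨j, hj⟩ := hcolor e (hFE heF) c hψ
          exact mem_biUnion.2 ⟨(i, j), mem_univ _, mem_filter.2 ⟨heF, by rw [hi, hj]⟩⟩
      _ ≤ ∑ ij : Bool × Bool, (#{e ∈ F | (color ij.2 e, ends ij.1 e) = (c, v)} : ℝ) := by
          exact_mod_cast card_biUnion_le
      _ ≤ ∑ _ij : Bool × Bool, 8 * M := by
          refine sum_le_sum fun ij _ => (hfiber ij (c, v)).trans_eq ?_
          norm_num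
      _ = 32 * M := by
          norm_num
          ring
  have hF := card_le_mul_logb_of_cuts ends ψ (by positivity) univ F (fun _ _ _ => mem_univ _)
    (fun e he => hcut e (hFE he)) hdeg
  rw [card_univ] at hF
  linarith

end Charging

section Placement

variable {A σ V π κ : Type*}

/-- A position among those indexed by `σ`, together with a background filling of all positions; an
element of `V` is inserted by overwriting the background at the chosen position, so that the
background value there is irrelevant. -/
abbrev Slot (σ V : Type*) := σ × (σ → V)

/-- The vertices of the Kikuchi graph are `A`-indexed families of fillings `σ → V`; `place w x`
is the vertex obtained by inserting each `x a` into the slot `w a`. -/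
def place [DecidableEq σ] (w : A → Slot σ V) (x : A → V) : A → σ → V :=
  fun a => Function.update (w a).2 (w a).1 (x a)

theorem sum_prod_agree_le [Fintype A] [DecidableEq A] [DecidableEq V] (P : Finset π)
    (x : A → V) (y : π → A → V) {k l B : ℝ} (hl : 0 ≤ l)
    (hagree : ∀ J : Finset A, #{p ∈ P | ∀ a ∈ J, y p a = x a} * k ^ #J ≤ B * l ^ #J) :
    ∑ p ∈ P, ∏ a, ((if y p a = x a then k else 0) + l) ≤ (2 * l) ^ Fintype.card A * B := by
  calc ∑ p ∈ P, ∏ a, ((if y p a = x a then k else 0) + l)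
      = ∑ J : Finset A, #{p ∈ P | ∀ a ∈ J, y p a = x a} * k ^ #J * l ^ #Jᶜ := by
        simp only [Fintype.prod_add, prod_ite_zero, prod_const]
        rw [sum_comm]
        refine sum_congr rfl fun J _ => ?_
        rw [← sum_mul, ← sum_filter, sum_const, nsmul_eq_mul]
    _ ≤ ∑ J : Finset A, B * l ^ #J * l ^ #Jᶜ := by
        exact sum_le_sum fun J _ => mul_le_mul_of_nonneg_right (hagree J) (pow_nonneg hl _)
    _ = (2 * l) ^ Fintype.card A * B := by
        simp only [mul_assoc, ← pow_add, card_add_card_compl, sum_const, card_univ,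
          Fintype.card_finset, nsmul_eq_mul, Nat.cast_pow, Nat.cast_ofNat]
        ring

/-- The members of `P` which have the same key as `p` and agree with it on the entries in `J`. -/
def agreeing [DecidableEq V] [DecidableEq κ] (P : Finset π) (key : π → κ) (x : π → A → V) (p : π)
    (J : Finset A) : Finset π :=
  {p' ∈ P | key p' = key p ∧ ∀ a ∈ J, x p' a = x p a}

theorem mem_agreeing [DecidableEq V] [DecidableEq κ] {P : Finset π} {key : π → κ} {x : π → A → V}
    {p p' : π} {J : Finset A} :
    p' ∈ agreeing P key x p J ↔ p' ∈ P ∧ key p' = key p ∧ ∀ a ∈ J, x p' a = x p a :=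
  mem_filter

variable [Fintype σ] [DecidableEq σ] [Fintype V] [DecidableEq V]

theorem card_filter_update_eq (j : σ) (y : V) (g : σ → V) :
    #{f : σ → V | Function.update f j y = g} = if g j = y then Fintype.card V else 0 := by
  split_ifs with hy
  · have himage : ({f : σ → V | Function.update f j y = g} : Finset (σ → V)) =
        univ.image (Function.update g j) := by
      ext f
      simp only [mem_filter, mem_univ, true_and, mem_image, Function.update_eq_iff, hy]
      refine ⟨fun hf => ⟨f j, rfl, fun i hi => (hf i hi).symm⟩, ?_⟩
      rintro ⟨v, -, hv⟩ i hi
      exact (hv i hi).symm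
    rw [himage, card_image_of_injective _ (Function.update_injective g j), card_univ]
  · refine card_eq_zero.2 (filter_eq_empty_iff.2 fun f _ hf => hy ?_)
    rw [← hf, Function.update_self]

theorem sum_ite_update_apply_eq_le (i j : σ) (x y : V) :
    ∑ f : σ → V, (if Function.update f i x j = y then Fintype.card V else 0) ≤
      Fintype.card V ^ Fintype.card σ *
        ((if i = j then if x = y then Fintype.card V else 0 else 0) + 1) := by
  obtain rfl | hij := eq_or_ne i j
  · simp [mul_add]
  · have hcount : #{f : σ → V | f j = y} = Fintype.card V ^ (Fintype.card σ - 1) := by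
      have := Fintype.card_filter_piFinset_const_eq_of_mem (univ : Finset V) j (mem_univ y)
      rwa [Fintype.piFinset_univ, card_univ] at this
    simp only [Function.update_of_ne hij.symm, hij, if_false, zero_add, mul_one]
    rw [← sum_filter, sum_const, hcount, smul_eq_mul,
      pow_sub_one_mul (Fintype.card_pos_iff.2 ⟨i⟩).ne']

theorem card_slot_collisions_le (x y : V) :
    #{z : Slot σ V × Slot σ V | Function.update z.1.2 z.1.1 x = Function.update z.2.2 z.2.1 y} ≤
      Fintype.card (Slot σ V) * ((if x = y then Fintype.card V else 0) + Fintype.card σ) := by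
  calc #{z : Slot σ V × Slot σ V | Function.update z.1.2 z.1.1 x = Function.update z.2.2 z.2.1 y}
      = ∑ i : σ, ∑ f : σ → V, ∑ j : σ, #{g : σ → V | Function.update g j y =
          Function.update f i x} := by
        simp only [card_filter, Fintype.sum_prod_type, eq_comm]
    _ = ∑ i : σ, ∑ j : σ, ∑ f : σ → V,
          if Function.update f i x j = y then Fintype.card V else 0 := by
        simp only [card_filter_update_eq]
        exact sum_congr rfl fun i _ => sum_comm
    _ ≤ ∑ i : σ, ∑ j : σ, Fintype.card V ^ Fintype.card σ *
          ((if i = j then if x = y then Fintype.card V else 0 else 0) + 1) :=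
        sum_le_sum fun i _ => sum_le_sum fun j _ => sum_ite_update_apply_eq_le i j x y
    _ = Fintype.card (Slot σ V) * ((if x = y then Fintype.card V else 0) + Fintype.card σ) := by
        simp only [← mul_sum, sum_add_distrib, sum_ite_eq, mem_univ, if_true, sum_const, card_univ,
          smul_eq_mul, mul_one, Fintype.card_prod, Fintype.card_fun]
        ring

variable [Fintype A] [DecidableEq A]

theorem card_place_collisions_le (x y : A → V) :
    #{w : (A → Slot σ V) × (A → Slot σ V) | place w.1 x = place w.2 y} ≤
      Fintype.card (A → Slot σ V) *
        ∏ a, ((if x a = y a then Fintype.card V else 0) + Fintype.card σ) := by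
  calc #{w : (A → Slot σ V) × (A → Slot σ V) | place w.1 x = place w.2 y}
      = #(Fintype.piFinset fun a => ({z | Function.update z.1.2 z.1.1 (x a) =
          Function.update z.2.2 z.2.1 (y a)} : Finset (Slot σ V × Slot σ V))) := by
        refine card_equiv (Equiv.arrowProdEquivProdArrow A _ _).symm fun w => ?_
        simp [Equiv.arrowProdEquivProdArrow, place, funext_iff]
    _ ≤ ∏ a, Fintype.card (Slot σ V) *
          ((if x a = y a then Fintype.card V else 0) + Fintype.card σ) := by
        rw [Fintype.card_piFinset]
        exact prod_le_prod' fun a _ => card_slot_collisions_le (x a) (y a)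
    _ = Fintype.card (A → Slot σ V) *
          ∏ a, ((if x a = y a then Fintype.card V else 0) + Fintype.card σ) := by
        rw [prod_mul_distrib, prod_const, card_univ, Fintype.card_fun]

theorem sum_card_place_collisions_le [DecidableEq κ] (P : Finset π) (key : π → κ)
    (x : π → A → V) {B : ℝ}
    (hagree : ∀ p ∈ P, ∀ J : Finset A,
      #(agreeing P key x p J) * (Fintype.card V : ℝ) ^ #J ≤
        B * (Fintype.card σ : ℝ) ^ #J) :
    ∑ z ∈ P ×ˢ (univ : Finset (A → Slot σ V)), (#{z' ∈ P ×ˢ (univ : Finset (A → Slot σ V)) |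
        (key z'.1, place z'.2 (x z'.1)) = (key z.1, place z.2 (x z.1))} : ℝ) ≤
      #(P ×ˢ (univ : Finset (A → Slot σ V))) * ((2 * Fintype.card σ) ^ Fintype.card A * B) := by
  let slots := Fintype.card (A → Slot σ V)
  calc ∑ z ∈ P ×ˢ (univ : Finset (A → Slot σ V)), (#{z' ∈ P ×ˢ (univ : Finset (A → Slot σ V)) |
        (key z'.1, place z'.2 (x z'.1)) = (key z.1, place z.2 (x z.1))} : ℝ)
      = ∑ p ∈ P, ∑ p' ∈ P with key p' = key p, (#{w : (A → Slot σ V) × (A → Slot σ V) |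
          place w.1 (x p') = place w.2 (x p)} : ℝ) := by
        simp only [card_filter, sum_product, Prod.mk.injEq, Fintype.sum_prod_type, sum_filter,
          Nat.cast_sum, ite_and]
        refine sum_congr rfl fun _ _ => ?_
        rw [sum_comm]
        refine sum_congr rfl fun _ _ => ?_
        rw [sum_comm]
        split_ifs <;> simp
    _ ≤ ∑ p ∈ P, ∑ p' ∈ P with key p' = key p,
          slots * ∏ a, ((if x p' a = x p a then (Fintype.card V : ℝ) else 0) + Fintype.card σ) := by
        refine sum_le_sum fun p _ => sum_le_sum fun p' _ => ?_
        exact_mod_cast card_place_collisions_le (σ := σ) (x p') (x p)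
    _ ≤ ∑ _p ∈ P, slots * ((2 * Fintype.card σ : ℝ) ^ Fintype.card A * B) := by
        refine sum_le_sum fun p hp => ?_
        rw [← mul_sum]
        gcongr
        refine sum_prod_agree_le _ (x p) x (Nat.cast_nonneg _) fun J => ?_
        convert hagree p hp J
        ext p'
        simp only [mem_agreeing, mem_filter, and_assoc]
    _ = #(P ×ˢ (univ : Finset (A → Slot σ V))) *
          ((2 * Fintype.card σ) ^ Fintype.card A * B) := by
        rw [sum_const, nsmul_eq_mul, card_product, card_univ, Nat.cast_mul]
        ring

end Placement

section EvenCovers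

variable {V ι κ : Type*} [DecidableEq V]

/-- The characteristic vector of a set of vertices over the field with two elements. -/
def charVec (s : Finset V) : V → ZMod 2 :=
  ∑ v ∈ s, Pi.single v 1

/-- A weak rainbow even cover: a nonempty set of hyperedges covering each vertex evenly, in which
some color is used exactly once. -/
def HasWeakRainbowEvenCover [DecidableEq κ] (edge : ι → Finset V) (color : ι → κ) : Prop :=
  ∃ S : Finset ι, S.Nonempty ∧ (∀ v, Even #{e ∈ S | v ∈ edge e}) ∧
    ∃ c, #{e ∈ S | color e = c} = 1

/-- A proper hyperedge coloring: distinct hyperedges of the same color are disjoint. -/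
def IsProperColoring (edge : ι → Finset V) (color : ι → κ) : Prop :=
  ∀ e f, e ≠ f → color e = color f → Disjoint (edge e) (edge f)

/-- The span of the hyperedges whose color differs from `c`. A weak rainbow even cover using the
color of `e` once amounts to the membership of `e` in the span for that color. -/
def otherSpan (edge : ι → Finset V) (color : ι → κ) (c : κ) : Submodule (ZMod 2) (V → ZMod 2) :=
  .span (ZMod 2) ((fun e => charVec (edge e)) '' {e | color e ≠ c})

theorem sum_charVec_apply (S : Finset ι) (edge : ι → Finset V) (v : V) :
    (∑ e ∈ S, charVec (edge e)) v = (#{e ∈ S | v ∈ edge e} : ZMod 2) := by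
  simp [charVec]

theorem sum_charVec_eq_zero_iff {S : Finset ι} {edge : ι → Finset V} :
    ∑ e ∈ S, charVec (edge e) = 0 ↔ ∀ v, Even #{e ∈ S | v ∈ edge e} := by
  simp only [funext_iff, sum_charVec_apply, Pi.zero_apply, ZMod.natCast_eq_zero_iff_even]

theorem charVec_mem_otherSpan (edge : ι → Finset V) {color : ι → κ} {e : ι} {c : κ}
    (he : color e ≠ c) : charVec (edge e) ∈ otherSpan edge color c :=
  Submodule.subset_span ⟨e, he, rfl⟩

theorem hasWeakRainbowEvenCover_of_mem_otherSpan [DecidableEq κ] {edge : ι → Finset V}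
    {color : ι → κ} {e : ι} (he : charVec (edge e) ∈ otherSpan edge color (color e)) :
    HasWeakRainbowEvenCover edge color := by
  classical
  obtain ⟨l, hl, hsum⟩ := (Finsupp.mem_span_image_iff_linearCombination (ZMod 2)).1 he
  have hcolor (f : ι) (hf : f ∈ l.support) : color f ≠ color e := hl hf
  have he_notMem : e ∉ l.support := fun h => hcolor e h rfl
  have hsupport : ∑ f ∈ l.support, charVec (edge f) = charVec (edge e) := by
    rw [← hsum, Finsupp.linearCombination_apply, Finsupp.sum]
    refine sum_congr rfl fun f hf => ?_
    have hone : l f = 1 := Fin.eq_one_of_ne_zero (l f) (Finsupp.mem_support_iff.1 hf)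
    rw [hone, one_smul]
  refine ⟨insert e l.support, insert_nonempty _ _, ?_, color e, card_eq_one.2 ⟨e, ?_⟩⟩
  · rw [← sum_charVec_eq_zero_iff, sum_insert he_notMem, hsupport, ZModModule.add_self]
  · rw [filter_insert, if_pos rfl, filter_false_of_mem hcolor, insert_empty]

end EvenCovers

section Parity

variable {A σ V ι κ : Type*} [Fintype A] [DecidableEq V]

/-- The number of occurrences modulo two of each element in a family of fillings. -/
def parity [Fintype σ] (x : A → σ → V) : V → ZMod 2 :=
  ∑ a, ∑ i, Pi.single (x a i) 1

/-- Given enumerations `u e` of subsets of the hyperedges, `interleave u τ p` takes its entry at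
`a` from the member `p (τ a)` of the pair `p`. -/
def interleave {s : ι → Finset V} (u : ∀ e, A ≃ s e) (τ : A → Bool) (p : Bool → ι) : A → V :=
  fun a => u (p (τ a)) a

theorem parity_place_sub_parity_place [Fintype σ] [DecidableEq σ] (w : A → Slot σ V)
    (x y : A → V) :
    parity (place w x) - parity (place w y) =
      ∑ a, (Pi.single (x a) 1 - Pi.single (y a) 1 : V → ZMod 2) := by
  simp only [parity, ← sum_sub_distrib]
  refine sum_congr rfl fun a _ => ?_
  rw [sum_eq_single_of_mem (w a).1 (mem_univ _) fun i _ hi => ?_]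
  · simp only [place, Function.update_self]
  · simp only [place, Function.update_of_ne hi, sub_self]

theorem sum_single_equiv {s : Finset V} (u : A ≃ s) :
    ∑ a, (Pi.single (u a : V) 1 : V → ZMod 2) = charVec s := by
  rw [charVec, ← sum_coe_sort s, ← u.sum_comp]

theorem parity_interleave_sub {s : ι → Finset V} [Fintype σ] [DecidableEq σ]
    (u : ∀ e, A ≃ s e) (τ : A → Bool) (p : Bool → ι) (w : A → Slot σ V) :
    parity (place w (interleave u τ p)) - parity (place w (interleave u (fun a => !τ a) p)) =
      charVec (s (p false)) + charVec (s (p true)) := by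
  rw [parity_place_sub_parity_place, ← sum_single_equiv (u (p false)),
    ← sum_single_equiv (u (p true)), ← sum_add_distrib]
  refine sum_congr rfl fun a _ => ?_
  rw [ZModModule.sub_eq_add, interleave, interleave]
  cases τ a
  · rfl
  · exact add_comm _ _

theorem charVec_sdiff_add_charVec_sdiff {e f Q : Finset V} (he : Q ⊆ e) (hf : Q ⊆ f) :
    charVec (e \ Q) + charVec (f \ Q) = charVec e + charVec f := by
  have hsdiff {e : Finset V} (he : Q ⊆ e) : charVec (e \ Q) = charVec e - charVec Q :=
    eq_sub_of_add_eq (sum_sdiff he)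
  rw [hsdiff he, hsdiff hf, ZModModule.sub_eq_add, ZModModule.sub_eq_add, add_add_add_comm,
    ZModModule.add_self, add_zero]

end Parity

section CoDegrees

variable {n : ℕ} {ι π : Type} [Fintype ι]

theorem iCodeg_le_iMaxCodeg (edge : ι → Finset (Fin n)) (Q : Finset (Fin n)) :
    iCodeg edge Q ≤ iMaxCodeg edge #Q :=
  le_sup (f := iCodeg edge) (mem_filter.2 ⟨mem_univ Q, rfl⟩)

theorem card_le_iMaxCodeg_of_injOn {edge : ι → Finset (Fin n)} {Q : Finset (Fin n)}
    {S : Finset π} {f : π → ι} (hf : Set.InjOn f S) (hQ : ∀ x ∈ S, Q ⊆ edge (f x)) :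
    #S ≤ iMaxCodeg edge #Q :=
  (card_le_card_of_injOn f (fun x hx => mem_filter.2 ⟨mem_univ _, hQ x hx⟩) hf).trans
    (iCodeg_le_iMaxCodeg edge Q)

theorem iMaxCodeg_antitone (edge : ι → Finset (Fin n)) : Antitone (iMaxCodeg edge) := by
  refine fun r s hrs => Finset.sup_le fun Q hQ => ?_
  obtain ⟨Q', hQ'Q, hQ'⟩ := exists_subset_card_eq (hrs.trans_eq (mem_filter.1 hQ).2.symm)
  calc iCodeg edge Q ≤ iCodeg edge Q' :=
        card_le_card <| monotone_filter_right _ fun e _ he => hQ'Q.trans he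
    _ ≤ iMaxCodeg edge r := hQ' ▸ iCodeg_le_iMaxCodeg edge Q'

theorem mul_card_le_mul_iMaxCodeg_one {q : ℕ} {edge : ι → Finset (Fin n)}
    (hedge : ∀ e, #(edge e) = q) : q * Fintype.card ι ≤ n * iMaxCodeg edge 1 := by
  have hcount := card_nsmul_le_card_nsmul (s := (univ : Finset ι)) (t := (univ : Finset (Fin n)))
    (fun e v => v ∈ edge e) (m := q) (n := iMaxCodeg edge 1) (fun e _ => ?_) fun v _ => ?_
  · simpa [mul_comm] using hcount
  · simp [bipartiteAbove, hedge]
  · simpa [bipartiteBelow, iCodeg] using iCodeg_le_iMaxCodeg edge {v}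

end CoDegrees

section CorePairs

variable {V ι κ : Type*}

theorem IsProperColoring.eq_of_mem {edge : ι → Finset V} {color : ι → κ}
    (hcolor : IsProperColoring edge color) {e f : ι} (hef : color e = color f) {v : V}
    (he : v ∈ edge e) (hf : v ∈ edge f) : e = f :=
  by_contra fun hne => disjoint_left.1 (hcolor e f hne hef) he hf

theorem IsProperColoring.card_color_fiber_le [Fintype V] [Fintype ι] [DecidableEq κ]
    {edge : ι → Finset V} {color : ι → κ} (hcolor : IsProperColoring edge color)
    (hne : ∀ e, (edge e).Nonempty) (c : κ) : #{e | color e = c} ≤ Fintype.card V := by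
  classical
  refine (card_le_card_biUnion (f := edge) (fun e he f hf hef => ?_) fun e _ => hne e).trans
    (card_le_univ _)
  exact hcolor e f hef ((mem_filter.1 he).2.trans (mem_filter.1 hf).2.symm)

variable [DecidableEq V] [Fintype ι] [DecidableEq ι]

/-- The ordered pairs of distinct hyperedges with the same core. When `core e` is the set common
to the group of `e` in a partition of the hyperedges, these are the pairs inside the groups. -/
def corePairs (core : ι → Finset V) : Finset (Bool → ι) :=
  {p | p false ≠ p true ∧ core (p false) = core (p true)}

theorem core_eq_of_mem_corePairs {core : ι → Finset V} {p : Bool → ι} (hp : p ∈ corePairs core)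
    (i j : Bool) : core (p i) = core (p j) := by
  have h := (mem_filter.1 hp).2.2
  cases i <;> cases j <;> simp only [h]

theorem card_mul_le_card_corePairs {core : ι → Finset V} {b : ℕ}
    (hb : ∀ e, b + 1 ≤ #{f | core f = core e}) : Fintype.card ι * b ≤ #(corePairs core) := by
  rw [card_eq_sum_card_fiberwise (f := fun p => p false) fun _ _ => mem_coe.2 (mem_univ _),
    ← card_univ, ← smul_eq_mul]
  refine card_nsmul_le_sum _ _ _ fun e _ => ?_
  calc b ≤ #(({f | core f = core e} : Finset ι).erase e) := by
        rw [card_erase_of_mem (by simp only [mem_filter, mem_univ, true_and])]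
        exact Nat.le_sub_one_of_lt (hb e)
    _ ≤ #{p ∈ corePairs core | p false = e} := by
        refine card_le_card_of_injOn (fun f i => bif i then f else e) (fun f hf => ?_)
          fun f _ f' _ h => congrFun h true
        have := mem_erase.1 hf
        simp_all [corePairs, eq_comm]

theorem IsProperColoring.eq_of_mem_corePairs {edge core : ι → Finset V} {color : ι → κ}
    (hcolor : IsProperColoring edge color) (hcore : ∀ e, core e ⊆ edge e)
    (hne : ∀ e, (core e).Nonempty) {p p' : Bool → ι} (hp : p ∈ corePairs core)
    (hp' : p' ∈ corePairs core) {j : Bool} (hj : color (p j) = color (p' j))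
    (hnot : p (!j) = p' (!j)) : p = p' := by
  obtain ⟨v, hv⟩ := hne (p j)
  have hv' : v ∈ core (p' j) := by
    rwa [core_eq_of_mem_corePairs hp' j (!j), ← hnot, core_eq_of_mem_corePairs hp (!j) j]
  have hj' : p j = p' j := hcolor.eq_of_mem hj (hcore _ hv) (hcore _ hv')
  funext i
  cases i <;> cases j <;> assumption

theorem IsProperColoring.color_ne_of_mem_corePairs {edge core : ι → Finset V} {color : ι → κ}
    (hcolor : IsProperColoring edge color) (hcore : ∀ e, core e ⊆ edge e)
    (hne : ∀ e, (core e).Nonempty) {p : Bool → ι} (hp : p ∈ corePairs core) :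
    color (p false) ≠ color (p true) := fun h => by
  obtain ⟨v, hv⟩ := hne (p false)
  refine (mem_filter.1 hp).2.1 (hcolor.eq_of_mem h (hcore _ hv) (hcore _ ?_))
  rwa [core_eq_of_mem_corePairs hp true false]

end CorePairs

section PairCount

variable {n t : ℕ} {ι κ : Type} [Fintype ι] [DecidableEq ι]
  {edge core : ι → Finset (Fin n)} {color : ι → κ}

theorem card_le_iMaxCodeg_of_color_eq (hcolor : IsProperColoring edge color)
    (hcore : ∀ e, core e ⊆ edge e) (hne : ∀ e, (core e).Nonempty) {S : Finset (Bool → ι)}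
    {j : Bool} {c : κ} (hS : ∀ p ∈ S, p ∈ corePairs core ∧ color (p j) = c) {Q : Finset (Fin n)}
    (hQ : ∀ p ∈ S, Q ⊆ edge (p !j)) : #S ≤ iMaxCodeg edge #Q :=
  card_le_iMaxCodeg_of_injOn (f := fun p => p !j) (fun p hp p' hp' h =>
    hcolor.eq_of_mem_corePairs hcore hne (hS p hp).1 (hS p' hp').1
      ((hS p hp).2.trans (hS p' hp').2.symm) h) hQ

variable [DecidableEq κ]

theorem card_corePairs_color_eq_le (hcolor : IsProperColoring edge color)
    (hcore : ∀ e, core e ⊆ edge e) (hcard : ∀ e, #(core e) = t) (ht : t ≠ 0) (j : Bool) (c : κ) :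
    #{p ∈ corePairs core | color (p j) = c} ≤ n * iMaxCodeg edge t := by
  have hne (e : ι) : (core e).Nonempty := card_ne_zero.1 ((hcard e).trans_ne ht)
  have hfiber (e : ι) :
      #{p ∈ {p ∈ corePairs core | color (p j) = c} | p j = e} ≤ iMaxCodeg edge t := by
    rw [← hcard e]
    refine card_le_iMaxCodeg_of_color_eq hcolor hcore hne
      (fun p hp => mem_filter.1 (mem_filter.1 hp).1) fun p hp => ?_
    obtain ⟨hpE, rfl⟩ := mem_filter.1 hp
    have hpair := (mem_filter.1 hpE).1
    exact core_eq_of_mem_corePairs hpair j (!j) ▸ hcore (p !j)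
  have hmaps : ∀ p ∈ ({p ∈ corePairs core | color (p j) = c} : Finset (Bool → ι)),
      p j ∈ ({e | color e = c} : Finset ι) :=
    fun p hp => mem_filter.2 ⟨mem_univ _, (mem_filter.1 hp).2⟩
  calc #{p ∈ corePairs core | color (p j) = c}
      ≤ iMaxCodeg edge t * #{e | color e = c} :=
        card_le_mul_card_image_of_maps_to hmaps _ fun e _ => hfiber e
    _ ≤ n * iMaxCodeg edge t := by
        rw [mul_comm]
        gcongr
        simpa only [Fintype.card_fin] using
          hcolor.card_color_fiber_le (fun e => (hne e).mono (hcore e)) c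

end PairCount

section AgreeingPairs

/-- A sequence of signs in which each sign occurs at most `⌈m / 2⌉` times. -/
def IsBalanced {m : ℕ} (τ : Fin m → Bool) : Prop :=
  ∀ b, #{a | τ a = b} ≤ (m + 1) / 2

theorem exists_isBalanced (m : ℕ) : ∃ τ : Fin m → Bool, IsBalanced τ := by
  obtain ⟨J, -, hJ⟩ := exists_subset_card_eq (s := (univ : Finset (Fin m))) (n := m / 2)
    (by rw [card_fin]; exact Nat.div_le_self m 2)
  refine ⟨fun a => decide (a ∈ J), fun b => ?_⟩
  cases b
  · simp only [decide_eq_false_iff_not, filter_not, filter_mem_eq_inter, univ_inter,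
      card_univ_sdiff, Fintype.card_fin, hJ]
    lia
  · simp only [decide_eq_true_eq, filter_mem_eq_inter, univ_inter, hJ]
    lia

theorem IsBalanced.xor {m : ℕ} {τ : Fin m → Bool} (hτ : IsBalanced τ) (i : Bool) :
    IsBalanced fun a => i ^^ τ a := fun b => by
  cases i
  · simpa only [Bool.false_xor] using hτ b
  · simpa only [Bool.true_xor, Bool.not_eq_eq_eq_not] using hτ (!b)

/-- The conditions on the co-degrees `d` of a `t + m`-uniform hypergraph on `n` vertices under
which words of length `ℓ` suffice: `below` controls agreements on vertices of a single member of a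
pair, `above` those on vertices of both members, which also determine the core. -/
structure AdmissibleSlots (n ℓ m t : ℕ) (d : ℕ → ℝ) : Prop where
  below : ∀ r, 1 ≤ r → r ≤ (m + 1) / 2 → d r * n ^ r ≤ n * d t * ℓ ^ r
  above : ∀ s r, s ≤ (m + 1) / 2 → r ≤ (m + 1) / 2 → s + r ≤ m →
    d (t + r) * n ^ (s + r) ≤ n * d t * ℓ ^ (s + r)

variable {n m t ℓ : ℕ} {ι κ : Type} {edge core : ι → Finset (Fin n)} {color : ι → κ}

theorem interleave_mem_sdiff (u : ∀ e, Fin m ≃ ↥(edge e \ core e)) (τ : Fin m → Bool)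
    (p : Bool → ι) (a : Fin m) : interleave u τ p a ∈ edge (p (τ a)) \ core (p (τ a)) :=
  (u (p (τ a)) a).2

theorem injOn_interleave (u : ∀ e, Fin m ≃ ↥(edge e \ core e)) (τ : Fin m → Bool)
    (p : Bool → ι) (b : Bool) : Set.InjOn (interleave u τ p) {a | τ a = b} := by
  rintro a rfl a' (ha' : τ a' = τ a) h
  rw [interleave, interleave, ha'] at h
  exact (u _).injective (Subtype.ext h)

theorem card_image_interleave (u : ∀ e, Fin m ≃ ↥(edge e \ core e)) (τ : Fin m → Bool)
    (p : Bool → ι) (J : Finset (Fin m)) (b : Bool) :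
    #(({a ∈ J | τ a = b} : Finset (Fin m)).image (interleave u τ p)) = #{a ∈ J | τ a = b} :=
  card_image_of_injOn <| (injOn_interleave u τ p b).mono fun _ ha => (mem_filter.1 ha).2

variable [Fintype ι] [DecidableEq ι] [DecidableEq κ]

/-- The pairs which have the color of `p` at `j` and agree with it on the entries in `J`. -/
abbrev agreeingPairs (core : ι → Finset (Fin n)) (color : ι → κ)
    (u : ∀ e, Fin m ≃ ↥(edge e \ core e)) (τ : Fin m → Bool) (j : Bool) :
    (Bool → ι) → Finset (Fin m) → Finset (Bool → ι) :=
  agreeing (corePairs core) (fun p => color (p j)) (interleave u τ)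

variable (u : ∀ e, Fin m ≃ ↥(edge e \ core e)) (τ : Fin m → Bool) {j : Bool} {p : Bool → ι}
  {J : Finset (Fin m)}

theorem image_interleave_subset_edge {p' : Bool → ι}
    (hp' : p' ∈ agreeingPairs core color u τ j p J) (b : Bool) :
    ({a ∈ J | τ a = b} : Finset (Fin m)).image (interleave u τ p) ⊆ edge (p' b) := by
  refine image_subset_iff.2 fun a ha => ?_
  obtain ⟨haJ, rfl⟩ := mem_filter.1 ha
  rw [← (mem_agreeing.1 hp').2.2 a haJ]
  exact (mem_sdiff.1 (interleave_mem_sdiff u τ p' a)).1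

theorem IsProperColoring.card_agreeingPairs_le_iMaxCodeg (hcolor : IsProperColoring edge color)
    (hcore : ∀ e, core e ⊆ edge e) (hne : ∀ e, (core e).Nonempty) :
    #(agreeingPairs core color u τ j p J) ≤ iMaxCodeg edge #{a ∈ J | τ a = !j} := by
  rw [← card_image_interleave u τ p]
  exact card_le_iMaxCodeg_of_color_eq hcolor hcore hne
    (fun p' hp' => ⟨(mem_agreeing.1 hp').1, (mem_agreeing.1 hp').2.1⟩)
    fun p' hp' => image_interleave_subset_edge u τ hp' (!j)

theorem IsProperColoring.card_agreeingPairs_le_iMaxCodeg_add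
    (hcolor : IsProperColoring edge color) (hcore : ∀ e, core e ⊆ edge e)
    (hcard : ∀ e, #(core e) = t) (ht : t ≠ 0) (hp : p ∈ corePairs core) {a : Fin m} (ha : a ∈ J)
    (haj : τ a = j) :
    #(agreeingPairs core color u τ j p J) ≤ iMaxCodeg edge (t + #{a ∈ J | τ a = !j}) := by
  have hne (e : ι) : (core e).Nonempty := card_ne_zero.1 ((hcard e).trans_ne ht)
  have hdisj : Disjoint (core (p j))
      (({a ∈ J | τ a = !j} : Finset (Fin m)).image (interleave u τ p)) := by
    refine disjoint_right.2 fun v hv => ?_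
    obtain ⟨b, -, rfl⟩ := mem_image.1 hv
    rw [core_eq_of_mem_corePairs hp j (τ b)]
    exact (mem_sdiff.1 (interleave_mem_sdiff u τ p b)).2
  rw [← hcard (p j), ← card_image_interleave u τ p, ← card_union_of_disjoint hdisj]
  refine card_le_iMaxCodeg_of_color_eq hcolor hcore hne
    (fun p' hp' => ⟨(mem_agreeing.1 hp').1, (mem_agreeing.1 hp').2.1⟩) fun p' hp' => ?_
  refine union_subset ?_ (image_interleave_subset_edge u τ hp' (!j))
  obtain ⟨hpair, hcol, hagree⟩ := mem_agreeing.1 hp'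
  have hmem' := (mem_sdiff.1 (interleave_mem_sdiff u τ p' a)).1
  have hmem := (mem_sdiff.1 (interleave_mem_sdiff u τ p a)).1
  rw [haj] at hmem hmem'
  rw [← hcolor.eq_of_mem hcol hmem' (hagree a ha ▸ hmem),
    core_eq_of_mem_corePairs hpair j (!j)]
  exact hcore _

theorem AdmissibleSlots.card_agreeingPairs_mul_pow_le
    (hslots : AdmissibleSlots n ℓ m t fun r => iMaxCodeg edge r)
    (hcolor : IsProperColoring edge color) (hcore : ∀ e, core e ⊆ edge e)
    (hcard : ∀ e, #(core e) = t) (ht : t ≠ 0) {τ : Fin m → Bool} (hτ : IsBalanced τ) (j : Bool)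
    (hp : p ∈ corePairs core) (J : Finset (Fin m)) :
    (#(agreeingPairs core color u τ j p J) : ℝ) * n ^ #J ≤ n * iMaxCodeg edge t * ℓ ^ #J := by
  have hbalanced (b : Bool) : #{a ∈ J | τ a = b} ≤ (m + 1) / 2 :=
    (card_le_card (filter_subset_filter _ (subset_univ J))).trans (hτ b)
  have hsplit : #{a ∈ J | τ a = j} + #{a ∈ J | τ a = !j} = #J := by
    simp only [Bool.eq_not, card_filter_add_card_filter_not]
  by_cases hj : ∃ a ∈ J, τ a = j
  · obtain ⟨a, ha, haj⟩ := hj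
    calc (#(agreeingPairs core color u τ j p J) : ℝ) * n ^ #J
        ≤ iMaxCodeg edge (t + #{a ∈ J | τ a = !j}) * n ^ #J := by
          gcongr
          exact hcolor.card_agreeingPairs_le_iMaxCodeg_add u τ hcore hcard ht hp ha haj
      _ ≤ n * iMaxCodeg edge t * ℓ ^ #J := by
          rw [← hsplit]
          exact hslots.above _ _ (hbalanced j) (hbalanced !j)
            (hsplit.trans_le ((card_le_univ J).trans_eq (Fintype.card_fin m)))
  have hnone : #{a ∈ J | τ a = j} = 0 :=
    card_eq_zero.2 (filter_eq_empty_iff.2 fun a ha haj => hj ⟨a, ha, haj⟩)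
  obtain rfl | hJ := J.eq_empty_or_nonempty
  · simpa [agreeing] using mod_cast
      card_corePairs_color_eq_le hcolor hcore hcard ht j (color (p j))
  · have hne (e : ι) : (core e).Nonempty := card_ne_zero.1 ((hcard e).trans_ne ht)
    have hJ_card : #{a ∈ J | τ a = !j} = #J := by rw [← hsplit, hnone, zero_add]
    calc (#(agreeingPairs core color u τ j p J) : ℝ) * n ^ #J
        ≤ iMaxCodeg edge #J * n ^ #J := by
          gcongr
          exact hJ_card ▸ hcolor.card_agreeingPairs_le_iMaxCodeg u τ hcore hne
      _ ≤ n * iMaxCodeg edge t * ℓ ^ #J :=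
          hslots.below _ hJ.card_pos (hJ_card ▸ hbalanced !j)

end AgreeingPairs

section KikuchiGraph

variable {n m t ℓ : ℕ} {ι κ : Type} {edge core : ι → Finset (Fin n)} {color : ι → κ}

/-- The two ends of the edge of the Kikuchi graph given by a pair of hyperedges and a family of
slots. Both ends carry entries of both members of the pair, exchanged between the ends. -/
def kikuchiEnd (u : ∀ e, Fin m ≃ ↥(edge e \ core e)) (τ : Fin m → Bool) (i : Bool)
    (z : (Bool → ι) × (Fin m → Slot (Fin ℓ) (Fin n))) : Fin m → Fin ℓ → Fin n :=
  place z.2 (interleave u (fun a => i ^^ τ a) z.1)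

/-- The cut of the Kikuchi graph attached to the color `c`. -/
def kikuchiCut (edge : ι → Finset (Fin n)) (color : ι → κ) (c : κ) (x : Fin m → Fin ℓ → Fin n) :
    (Fin n → ZMod 2) ⧸ otherSpan edge color c :=
  (otherSpan edge color c).mkQ (parity x)

variable {u : ∀ e, Fin m ≃ ↥(edge e \ core e)} {τ : Fin m → Bool}
  {z : (Bool → ι) × (Fin m → Slot (Fin ℓ) (Fin n))}

theorem parity_kikuchiEnd_sub (hcore : ∀ e, core e ⊆ edge e)
    (hz : core (z.1 false) = core (z.1 true)) :
    parity (kikuchiEnd u τ false z) - parity (kikuchiEnd u τ true z) =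
      charVec (edge (z.1 false)) + charVec (edge (z.1 true)) := by
  simp only [kikuchiEnd, Bool.false_xor, Bool.true_xor]
  rw [parity_interleave_sub, hz, charVec_sdiff_add_charVec_sdiff (hz ▸ hcore _) (hcore _)]

theorem kikuchiCut_eq_iff (hcore : ∀ e, core e ⊆ edge e)
    (hz : core (z.1 false) = core (z.1 true)) {c : κ} :
    kikuchiCut edge color c (kikuchiEnd u τ false z) =
        kikuchiCut edge color c (kikuchiEnd u τ true z) ↔
      charVec (edge (z.1 false)) + charVec (edge (z.1 true)) ∈ otherSpan edge color c := by
  rw [kikuchiCut, kikuchiCut, Submodule.mkQ_apply, Submodule.mkQ_apply, Submodule.Quotient.eq,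
    parity_kikuchiEnd_sub hcore hz]

theorem exists_color_eq_of_kikuchiCut_ne (hcore : ∀ e, core e ⊆ edge e)
    (hz : core (z.1 false) = core (z.1 true)) {c : κ}
    (hc : kikuchiCut edge color c (kikuchiEnd u τ false z) ≠
      kikuchiCut edge color c (kikuchiEnd u τ true z)) : ∃ j, color (z.1 j) = c := by
  by_contra! hne
  exact hc <| (kikuchiCut_eq_iff hcore hz).2 <|
    add_mem (charVec_mem_otherSpan edge (hne false)) (charVec_mem_otherSpan edge (hne true))

theorem exists_kikuchiCut_ne [DecidableEq κ] (hcover : ¬HasWeakRainbowEvenCover edge color)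
    (hcore : ∀ e, core e ⊆ edge e) (hz : core (z.1 false) = core (z.1 true))
    (hne : color (z.1 false) ≠ color (z.1 true)) :
    ∃ c, kikuchiCut edge color c (kikuchiEnd u τ false z) ≠
      kikuchiCut edge color c (kikuchiEnd u τ true z) := by
  refine ⟨color (z.1 false), fun h => hcover <|
    hasWeakRainbowEvenCover_of_mem_otherSpan (e := z.1 false) ?_⟩
  exact (Submodule.add_mem_iff_left _ (charVec_mem_otherSpan edge hne.symm)).1
    ((kikuchiCut_eq_iff hcore hz).1 h)

variable [Fintype ι] [DecidableEq ι] [DecidableEq κ]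

theorem AdmissibleSlots.sum_card_kikuchi_collisions_le
    (hslots : AdmissibleSlots n ℓ m t fun r => iMaxCodeg edge r)
    (hcolor : IsProperColoring edge color) (hcore : ∀ e, core e ⊆ edge e)
    (hcard : ∀ e, #(core e) = t) (ht : t ≠ 0) (hτ : IsBalanced τ) (i j : Bool) :
    let E := corePairs core ×ˢ (univ : Finset (Fin m → Slot (Fin ℓ) (Fin n)))
    ∑ z ∈ E, (#{z' ∈ E | (color (z'.1 j), kikuchiEnd u τ i z') =
        (color (z.1 j), kikuchiEnd u τ i z)} : ℝ) ≤
      #E * ((2 * ℓ) ^ m * (n * iMaxCodeg edge t)) := by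
  simpa only [Fintype.card_fin] using!
    sum_card_place_collisions_le (σ := Fin ℓ) (corePairs core) (fun p => color (p j))
      (interleave u fun a => i ^^ τ a) (B := n * iMaxCodeg edge t) fun p hp J => by
        simpa only [Fintype.card_fin] using
          hslots.card_agreeingPairs_mul_pow_le u hcolor hcore hcard ht (hτ.xor i) j hp J

theorem AdmissibleSlots.card_corePairs_le
    (hslots : AdmissibleSlots n ℓ m t fun r => iMaxCodeg edge r)
    (hcover : ¬HasWeakRainbowEvenCover edge color) (hcolor : IsProperColoring edge color)
    (hcore : ∀ e, core e ⊆ edge e) (hcard : ∀ e, #(core e) = t) (ht : t ≠ 0)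
    (u : ∀ e, Fin m ≃ ↥(edge e \ core e)) (hn : 0 < n) (hℓ : 0 < ℓ) (hd : 0 < iMaxCodeg edge t) :
    (#(corePairs core) : ℝ) ≤
      64 * 2 ^ m * (n * iMaxCodeg edge t) * (m * ℓ * Real.logb 2 n) := by
  classical
  obtain ⟨τ, hτ⟩ := exists_isBalanced m
  have hne (e : ι) : (core e).Nonempty := card_ne_zero.1 ((hcard e).trans_ne ht)
  let E := corePairs core ×ˢ (univ : Finset (Fin m → Slot (Fin ℓ) (Fin n)))
  have hpair {z} (hz : z ∈ E) : z.1 ∈ corePairs core := (mem_product.1 hz).1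
  have hz_core {z} (hz : z ∈ E) := core_eq_of_mem_corePairs (hpair hz) false true
  have hE := card_le_of_second_moment (kikuchiEnd u τ) (fun j z => color (z.1 j))
    (kikuchiCut edge color) E (M := (2 * ℓ) ^ m * (n * iMaxCodeg edge t)) (by positivity)
    (fun i j => hslots.sum_card_kikuchi_collisions_le hcolor hcore hcard ht hτ i j)
    (fun z hz => exists_kikuchiCut_ne hcover hcore (hz_core hz)
      (hcolor.color_ne_of_mem_corePairs hcore hne (hpair hz)))
    fun z hz c hc => exists_color_eq_of_kikuchiCut_ne hcore (hz_core hz) hc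
  have hE_card : (#E : ℝ) = #(corePairs core) * (ℓ ^ m * (n ^ ℓ) ^ m) := by
    simp [E, mul_pow]
  have hvertices : (Fintype.card (Fin m → Fin ℓ → Fin n) : ℝ) = (n ^ ℓ) ^ m := by
    simp
  rw [hE_card, hvertices, Real.logb_pow, Real.logb_pow] at hE
  refine le_of_mul_le_mul_right (hE.trans_eq ?_) (by positivity : (0 : ℝ) < ℓ ^ m * (n ^ ℓ) ^ m)
  ring

end KikuchiGraph

section GoodIndex

variable {n q t m ℓ : ℕ} {d : ℕ → ℝ}

theorem GoodIndex.le_apply (hgood : GoodIndex n q d t) (hq : Odd q) (hn : 1 ≤ n) {y : ℝ}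
    (hy : 0 ≤ y) (hd : y * (n : ℝ) ^ (1 - 2 / (q : ℝ)) ≤ d 1) : y ≤ d t := by
  have hn1 : (1 : ℝ) ≤ n := Nat.one_le_cast.2 hn
  have hq0 : (0 : ℝ) < q := Nat.cast_pos.2 hq.pos
  obtain ⟨-, -, hbelow, habove⟩ := hgood
  have of_exponent_nonneg {x : ℝ} (hx : 0 ≤ 1 - 2 / (q : ℝ) + x) (hdt : d 1 * (n : ℝ) ^ x ≤ d t) :
      y ≤ d t := by
    calc y ≤ y * (n : ℝ) ^ (1 - 2 / (q : ℝ) + x) :=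
          le_mul_of_one_le_right hy (Real.one_le_rpow hn1 hx)
      _ = y * (n : ℝ) ^ (1 - 2 / (q : ℝ)) * (n : ℝ) ^ x := by
          rw [Real.rpow_add (by positivity), mul_assoc]
      _ ≤ d 1 * (n : ℝ) ^ x := by gcongr
      _ ≤ d t := hdt
  obtain ht | ht | ht := lt_trichotomy (2 * t) q
  · refine of_exponent_nonneg ?_ (hbelow ht)
    have hexponent : 1 - 2 / (q : ℝ) + -(2 / (q : ℝ)) * ((t : ℝ) - 1) = (q - 2 * t) / q := by
      field_simp
      ring
    have ht' : (2 * t : ℝ) ≤ q := mod_cast ht.le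
    rw [hexponent]
    exact div_nonneg (sub_nonneg.2 ht') hq0.le
  · exact absurd (ht ▸ even_two_mul t) (Nat.not_even_iff_odd.2 hq)
  · exact of_exponent_nonneg (by linarith) (habove ht)

theorem mul_pow_le_of_div_le_rpow {d d' x : ℝ} {k : ℕ} (hn : 1 ≤ n) (hd' : 0 < d')
    (hℓ : (n : ℝ) ^ (1 - 2 / (q : ℝ)) ≤ ℓ) (hd : d / d' ≤ (n : ℝ) ^ x)
    (hx : x + 2 / q * k ≤ 1) : d * n ^ k ≤ n * d' * ℓ ^ k := by
  have hn0 : (0 : ℝ) < n := Nat.cast_pos.2 hn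
  have hn1 : (1 : ℝ) ≤ n := Nat.one_le_cast.2 hn
  calc d * n ^ k ≤ (n : ℝ) ^ x * d' * ((n : ℝ) ^ (2 / (q : ℝ)) * n ^ (1 - 2 / (q : ℝ))) ^ k := by
        rw [← Real.rpow_add hn0, add_sub_cancel, Real.rpow_one]
        gcongr
        exact (div_le_iff₀ hd').1 hd
    _ = (n : ℝ) ^ (x + 2 / q * k) * d' * ((n : ℝ) ^ (1 - 2 / (q : ℝ))) ^ k := by
        rw [mul_pow, Real.rpow_add hn0, Real.rpow_mul hn0.le, Real.rpow_natCast]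
        ring
    _ ≤ n * d' * ℓ ^ k := by
        gcongr
        exact (Real.rpow_le_rpow_of_exponent_le hn1 hx).trans_eq (Real.rpow_one _)

theorem GoodIndex.mul_pow_le (hgood : GoodIndex n q d t) (hq : Odd q) (hn : 1 ≤ n)
    (hℓ : (n : ℝ) ^ (1 - 2 / (q : ℝ)) ≤ ℓ) (hdt : 0 < d t) (hm : t + m = q) {s r : ℕ}
    (hs : s ≤ (m + 1) / 2) (hr : r ≤ m / 2) :
    d (t + r) * n ^ (s + r) ≤ n * d t * ℓ ^ (s + r) := by
  have hq0 : (0 : ℝ) < q := Nat.cast_pos.2 hq.pos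
  refine mul_pow_le_of_div_le_rpow hn hdt hℓ (hgood.2.1 (t + r) (by lia) (by lia)) ?_
  have hexponent : (t : ℝ) - (if Even t then 1 else 0) + 2 * s ≤ q := by
    split_ifs with ht
    · have : t + 2 * s ≤ q + 1 := by lia
      have : (t : ℝ) + 2 * s ≤ q + 1 := mod_cast this
      linarith
    · have : t + 2 * s ≤ q := by
        obtain ⟨a, rfl⟩ := Nat.not_even_iff_odd.1 ht
        obtain ⟨b, rfl⟩ := hq
        lia
      simpa only [sub_zero] using mod_cast this
  calc _ = ((t : ℝ) - (if Even t then 1 else 0) + 2 * s) / q := by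
        push_cast
        field_simp
        ring
    _ ≤ 1 := (div_le_one hq0).2 hexponent

theorem GoodIndex.admissibleSlots (hgood : GoodIndex n q d t) (hq : Odd q) (hn : 1 ≤ n)
    (hℓ : (n : ℝ) ^ (1 - 2 / (q : ℝ)) ≤ ℓ) (hd : Antitone d) (hdt : 0 < d t) (hm : t + m = q) :
    AdmissibleSlots n ℓ m t d where
  below r hr hrm := by
    refine mul_pow_le_of_div_le_rpow hn hdt hℓ (hgood.1 r hr (by lia)) (le_of_eq ?_)
    ring
  above s r hs hr hsr := by
    obtain hrm | hrm := le_or_gt r (m / 2)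
    · exact hgood.mul_pow_le hq hn hℓ hdt hm hs hrm
    · calc d (t + r) * n ^ (s + r) ≤ d (t + (r - 1)) * n ^ (s + 1 + (r - 1)) := by
            rw [show s + 1 + (r - 1) = s + r by lia]
            gcongr
            exact hd (by lia)
        _ ≤ n * d t * ℓ ^ (s + 1 + (r - 1)) :=
            hgood.mul_pow_le hq hn hℓ hdt hm (by lia) (by lia)
        _ = n * d t * ℓ ^ (s + r) := by rw [show s + 1 + (r - 1) = s + r by lia]

end GoodIndex

section MainTheorem

variable {n q t m ℓ : ℕ} {ι κ : Type} [Fintype ι] {edge : ι → Finset (Fin n)} {color : ι → κ}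

theorem iASR.goodIndex (hasr : iASR q t edge) : GoodIndex n q (fun r => iMaxCodeg edge r) t := by
  obtain ⟨_, _, _, _, _, _, hgood⟩ := hasr
  exact hgood

theorem iASR.le_iMaxCodeg (hasr : iASR q t edge) (hq : Odd q) (hn : 1 ≤ n)
    (hedge : ∀ e, #(edge e) = q) {y : ℝ} (hy : 0 ≤ y)
    (hdegree : y * (n : ℝ) ^ (1 - 2 / (q : ℝ)) ≤ q * Fintype.card ι / n) :
    y ≤ iMaxCodeg edge t := by
  refine hasr.goodIndex.le_apply hq hn hy (hdegree.trans ?_)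
  rw [div_le_iff₀' (Nat.cast_pos.2 hn)]
  exact_mod_cast mul_card_le_mul_iMaxCodeg_one hedge

theorem iASR.exists_core (hasr : iASR q t edge) :
    ∃ core : ι → Finset (Fin n), (∀ e, core e ⊆ edge e) ∧ (∀ e, #(core e) = t) ∧
      ∀ e, iMaxCodeg edge t ≤ 2 * #{f | core f = core e} := by
  obtain ⟨_, part, Q, hQ_card, hQ, hsize, -⟩ := hasr
  refine ⟨fun e => Q (part e), hQ, fun e => hQ_card _, fun e => ?_⟩
  calc iMaxCodeg edge t ≤ 2 * #{f | part f = part e} := by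
        have := (div_le_iff₀' two_pos).1 (hsize (part e)).1
        exact_mod_cast this
    _ ≤ 2 * #{f | Q (part f) = Q (part e)} := by
        gcongr
        exact fun h => congrArg Q h

theorem AdmissibleSlots.card_le [DecidableEq κ]
    (hslots : AdmissibleSlots n ℓ m t fun r => iMaxCodeg edge r)
    (hcover : ¬HasWeakRainbowEvenCover edge color) (hcolor : IsProperColoring edge color)
    (hedge : ∀ e, #(edge e) = t + m) {core : ι → Finset (Fin n)} (hcore : ∀ e, core e ⊆ edge e)
    (hcard : ∀ e, #(core e) = t) (hgroup : ∀ e, iMaxCodeg edge t ≤ 2 * #{f | core f = core e})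
    (ht : t ≠ 0) (hn : 0 < n) (hℓ : 0 < ℓ) (hd : 4 ≤ iMaxCodeg edge t) :
    (Fintype.card ι : ℝ) ≤ 256 * 2 ^ m * n * (m * ℓ * Real.logb 2 n) := by
  classical
  have hpetal (e : ι) : #(edge e \ core e) = m := by
    rw [card_sdiff_of_subset (hcore e), hedge, hcard, Nat.add_sub_cancel_left]
  have hpairs : Fintype.card ι * iMaxCodeg edge t ≤ 4 * #(corePairs core) := by
    have hgroup' (e : ι) : (iMaxCodeg edge t + 3) / 4 + 1 ≤ #{f | core f = core e} := by
      have := hgroup e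
      lia
    have := card_mul_le_card_corePairs hgroup'
    nlinarith [show iMaxCodeg edge t ≤ 4 * ((iMaxCodeg edge t + 3) / 4) by lia]
  have hupper := hslots.card_corePairs_le hcover hcolor hcore hcard ht
    (fun e => (equivFinOfCardEq (hpetal e)).symm) hn hℓ (by lia)
  have hd0 : (0 : ℝ) < iMaxCodeg edge t := Nat.cast_pos.2 (by lia)
  refine le_of_mul_le_mul_right ?_ hd0
  calc (Fintype.card ι : ℝ) * iMaxCodeg edge t ≤ 4 * #(corePairs core) := mod_cast hpairs
    _ ≤ 4 * (64 * 2 ^ m * (n * iMaxCodeg edge t) * (m * ℓ * Real.logb 2 n)) := by gcongr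
    _ = 256 * 2 ^ m * n * (m * ℓ * Real.logb 2 n) * iMaxCodeg edge t := by ring

theorem logb_two_le_two_mul_log {x : ℝ} (hx : 1 ≤ x) : Real.logb 2 x ≤ 2 * Real.log x := by
  rw [Real.logb, div_le_iff₀ (Real.log_pos one_lt_two)]
  nlinarith [Real.log_nonneg hx, Real.log_two_gt_d9]

theorem iASR.average_degree_le [DecidableEq κ] (hasr : iASR q t edge) (hq : Odd q) (hq2 : 2 ≤ q)
    (ht : 1 ≤ t) (htq : t ≤ q) (hn : 1 ≤ n) (hedge : ∀ e, #(edge e) = q)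
    (hcolor : IsProperColoring edge color) (hcover : ¬HasWeakRainbowEvenCover edge color)
    (hd : 4 ≤ iMaxCodeg edge t) :
    (q : ℝ) * Fintype.card ι / n ≤
      1024 * 2 ^ q * q ^ 2 * (n : ℝ) ^ (1 - 2 / (q : ℝ)) * Real.log n := by
  classical
  obtain ⟨m, hm⟩ := Nat.exists_eq_add_of_le htq
  obtain ⟨core, hcore, hcard, hgroup⟩ := hasr.exists_core
  set x : ℝ := (n : ℝ) ^ (1 - 2 / (q : ℝ))
  have hn1 : (1 : ℝ) ≤ n := Nat.one_le_cast.2 hn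
  have hx1 : 1 ≤ x := Real.one_le_rpow hn1 <|
    sub_nonneg.2 (div_le_one_of_le₀ (mod_cast hq2) (Nat.cast_nonneg _))
  have hslots : AdmissibleSlots n ⌈x⌉₊ m t fun r => iMaxCodeg edge r :=
    hasr.goodIndex.admissibleSlots hq hn (Nat.le_ceil x)
      (fun _ _ hrs => Nat.cast_le.2 (iMaxCodeg_antitone edge hrs)) (Nat.cast_pos.2 (by lia)) hm.symm
  have hcard_le := hslots.card_le hcover hcolor (fun e => (hedge e).trans hm) hcore hcard hgroup
    (by lia) hn (Nat.ceil_pos.2 (by linarith)) hd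
  have hceil : (⌈x⌉₊ : ℝ) ≤ 2 * x := by linarith [Nat.ceil_lt_add_one (zero_le_one.trans hx1)]
  have hlogb_nonneg : 0 ≤ Real.logb 2 n := Real.logb_nonneg one_lt_two hn1
  rw [div_le_iff₀ (by linarith)]
  calc (q : ℝ) * Fintype.card ι
      ≤ q * (256 * 2 ^ m * n * (m * ⌈x⌉₊ * Real.logb 2 n)) := by gcongr
    _ ≤ q * (256 * 2 ^ q * n * (q * (2 * x) * (2 * Real.log n))) := by
        gcongr
        · exact one_le_two
        · lia
        · lia
        · exact logb_two_le_two_mul_log hn1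
    _ = 1024 * 2 ^ q * q ^ 2 * x * Real.log n * n := by ring

end MainTheorem

/-- Weak rainbow even covers in approximately strongly regular
hypergraphs. For every odd `q ≥ 3` there is `A > 0` depending only on `q` such
that for every `t ∈ {1,…,q}` and `n ≥ 2`: every properly hyperedge-colored,
`q`-uniform, `t`-approximately strongly regular hypergraph on `[n]` with average
degree `q·|H|/n ≥ A·n^{1−2/q}·log n` contains an even cover using some color
exactly once. -/
theorem stmt3 :
    ∀ q : ℕ, Odd q → 3 ≤ q →
    ∃ A : ℝ, 0 < A ∧
      ∀ t : ℕ, 1 ≤ t → t ≤ q →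
      ∀ n : ℕ, 2 ≤ n →
      ∀ (ι κ : Type) [Fintype ι] [DecidableEq κ],
      ∀ (edge : ι → Finset (Fin n)) (color : ι → κ),
        (∀ e, (edge e).card = q) →
        (∀ e f, e ≠ f → color e = color f → Disjoint (edge e) (edge f)) →
        iASR q t edge →
        A * (n : ℝ) ^ ((1 : ℝ) - 2 / (q : ℝ)) * Real.log n ≤
          (q : ℝ) * (Fintype.card ι : ℝ) / (n : ℝ) →
        ∃ S : Finset ι, S.Nonempty ∧
          (∀ v : Fin n, Even ((S.filter (fun e => v ∈ edge e)).card)) ∧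
          ∃ c : κ, (S.filter (fun e => color e = c)).card = 1 := by
  intro q hq hq3
  refine ⟨2048 * 2 ^ q * q ^ 2, by positivity, ?_⟩
  intro t ht htq n hn ι κ _ _ edge color hedge hcolor hasr havg
  by_contra hcover
  have hlog : 1 / 2 ≤ Real.log n := by
    linarith [Real.log_two_gt_d9, Real.log_le_log two_pos (Nat.ofNat_le_cast.2 hn)]
  have hx : 0 < (n : ℝ) ^ (1 - 2 / (q : ℝ)) := by positivity
  have hd : (4 : ℝ) ≤ iMaxCodeg edge t := by
    refine hasr.le_iMaxCodeg hq (by lia) hedge (by norm_num) (le_trans ?_ havg)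
    calc 4 * (n : ℝ) ^ (1 - 2 / (q : ℝ))
        ≤ 2048 * 1 * 1 * (n : ℝ) ^ (1 - 2 / (q : ℝ)) * (1 / 2) := by linarith
      _ ≤ 2048 * 2 ^ q * q ^ 2 * (n : ℝ) ^ (1 - 2 / (q : ℝ)) * Real.log n := by
        gcongr
        · exact one_le_pow₀ one_le_two
        · exact one_le_pow₀ (Nat.one_le_cast.2 (by lia))
  have hupper := hasr.average_degree_le hq (by lia) ht htq (by lia) hedge hcolor hcover
    (mod_cast hd)
  have hpos : 0 < 1024 * 2 ^ q * q ^ 2 * (n : ℝ) ^ (1 - 2 / (q : ℝ)) * Real.log n := by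
    positivity
  linarith
end
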